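/- arXiv:1605.06051 — 6 statements merged into one kernel-verified Lean document; each statement's English description precedes it below -/
import Mathlib

section
/- Let I be a ccc, Borel generated σ-ideal on a Polish space X. Then the collection of I-measurable subsets of X is a σ-algebra: it contains the empty set, is closed under complements, and is closed under countable unions. -/
/-!
Only closure under countable unions needs an argument. Let `B` be Borel and positive. If some `f n`
contains a Borel positive subset of `B`, that subset witnesses measurability of the union at `B`.
Otherwise measurability of `f n` says that every Borel positive subset of `B` has a Borel
positive subset missing `f n`. A maximal disjoint family of Borel positive sets missing `f n` is
countable by ccc, and by maximality the part of `B` outside its union lies in `I`; this part is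
Borel and covers `B ∩ f n` (`exists_measurable_cover_inter`). Removing these countably many sets of
`I` from `B` leaves a Borel positive set disjoint from the union.
-/

open MeasureTheory Set

/-- A σ-ideal on `X`: contains `∅`, downward closed, closed under countable unions. -/
def IsSigmaIdeal {X : Type*} (I : Set (Set X)) : Prop :=
  ∅ ∈ I ∧ (∀ s t : Set X, s ⊆ t → t ∈ I → s ∈ I) ∧
    ∀ f : ℕ → Set X, (∀ n, f n ∈ I) → (⋃ n, f n) ∈ I

/-- `I` is ccc: every antichain of Borel `I`-positive sets (pairwise having no common
Borel `I`-positive subset) is countable. -/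
def IsCCCIdeal {X : Type*} [MeasurableSpace X] (I : Set (Set X)) : Prop :=
  ∀ 𝒜 : Set (Set X), (∀ A ∈ 𝒜, MeasurableSet A ∧ A ∉ I) →
    (∀ A ∈ 𝒜, ∀ B ∈ 𝒜, A ≠ B →
      ¬ ∃ C : Set X, MeasurableSet C ∧ C ∉ I ∧ C ⊆ A ∩ B) →
    𝒜.Countable

/-- `A` is `I`-measurable: every Borel `I`-positive set has a Borel `I`-positive subset
contained in `A` or in its complement. -/
def IMeasurable {X : Type*} [MeasurableSpace X] (I : Set (Set X)) (A : Set X) : Prop :=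
  ∀ B : Set X, MeasurableSet B → B ∉ I →
    ∃ B' : Set X, MeasurableSet B' ∧ B' ∉ I ∧ B' ⊆ B ∧ (B' ⊆ A ∨ B' ⊆ Aᶜ)

/-- Exhaustion: if the Borel positive sets missing `A` are dense below the Borel set `B`, then
`B ∩ A` is covered by a Borel set in `I`, namely the part of `B` outside the union of a maximal
disjoint family of such sets. -/
theorem exists_measurable_cover_inter {X : Type*} [MeasurableSpace X]
    {I : Set (Set X)} (hI : IsSigmaIdeal I) (hccc : IsCCCIdeal I) {A B : Set X}
    (hB : MeasurableSet B)
    (hdense : ∀ C : Set X, MeasurableSet C → C ∉ I → C ⊆ B →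
      ∃ D : Set X, MeasurableSet D ∧ D ∉ I ∧ D ⊆ C ∧ D ⊆ Aᶜ) :
    ∃ N : Set X, MeasurableSet N ∧ N ∈ I ∧ B ∩ A ⊆ N := by
  obtain ⟨𝒜, hmax⟩ := zorn_subset
    {𝒜 : Set (Set X) | (∀ D ∈ 𝒜, MeasurableSet D ∧ D ∉ I ∧ D ⊆ Aᶜ) ∧ 𝒜.PairwiseDisjoint id} (by
      intro c hc hchain
      refine ⟨⋃₀ c, ⟨?_, ?_⟩, fun s hs => subset_sUnion_of_mem hs⟩
      · rintro D ⟨s, hs, hD⟩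
        exact (hc hs).1 D hD
      · exact (pairwiseDisjoint_sUnion hchain.directedOn).2 fun s hs => (hc hs).2)
  obtain ⟨hprop, hdisj⟩ := hmax.prop
  have hcount : 𝒜.Countable := by
    refine hccc 𝒜 (fun D hD => ⟨(hprop D hD).1, (hprop D hD).2.1⟩) ?_
    rintro D hD E hE hne ⟨C, -, hCpos, hC⟩
    have hempty : D ∩ E = ∅ := (hdisj hD hE hne).inter_eq
    exact hCpos (hI.2.1 C ∅ (hempty ▸ hC) hI.1)
  have hmeas : MeasurableSet (B \ ⋃₀ 𝒜) :=
    hB.diff (MeasurableSet.sUnion hcount fun D hD => (hprop D hD).1)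
  refine ⟨B \ ⋃₀ 𝒜, hmeas, ?_, ?_⟩
  · by_contra hpos
    obtain ⟨D, hDm, hDpos, hDsub, hDA⟩ := hdense _ hmeas hpos sdiff_subset
    have hins : insert D 𝒜 ⊆ 𝒜 := by
      refine hmax.le_of_ge ⟨?_, ?_⟩ (subset_insert D 𝒜)
      · rintro E (rfl | hE)
        · exact ⟨hDm, hDpos, hDA⟩
        · exact hprop E hE
      · refine hdisj.insert fun E hE _ => ?_
        exact Set.disjoint_left.2 fun x hx hxE => (hDsub hx).2 ⟨E, hE, hxE⟩
    -- `D` both misses the union of the family and belongs to it, so it is empty.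
    exact hDpos (hI.2.1 D ∅ (fun x hx => (hDsub hx).2 ⟨D, hins (mem_insert D 𝒜), hx⟩) hI.1)
  · rintro x ⟨hxB, hxA⟩
    exact ⟨hxB, fun ⟨D, hD, hxD⟩ => (hprop D hD).2.2 hxD hxA⟩

theorem iMeasurable_sigmaAlgebra {X : Type*} [TopologicalSpace X] [PolishSpace X]
    [MeasurableSpace X] [BorelSpace X]
    (I : Set (Set X)) (hI : IsSigmaIdeal I) (hccc : IsCCCIdeal I)
    (hbg : ∀ s ∈ I, ∃ t : Set X, MeasurableSet t ∧ t ∈ I ∧ s ⊆ t) :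
    IMeasurable I (∅ : Set X) ∧
    (∀ A : Set X, IMeasurable I A → IMeasurable I Aᶜ) ∧
    (∀ f : ℕ → Set X, (∀ n, IMeasurable I (f n)) → IMeasurable I (⋃ n, f n)) := by
  refine ⟨?_, ?_, ?_⟩
  · intro B hB hpos
    exact ⟨B, hB, hpos, Subset.rfl, Or.inr (by simp)⟩
  · intro A hA B hB hpos
    obtain ⟨C, hC, hCpos, hCB, h⟩ := hA B hB hpos
    exact ⟨C, hC, hCpos, hCB, by rw [compl_compl]; exact h.symm⟩
  · intro f hf B hB hpos
    by_cases hex : ∃ n, ∃ C : Set X, MeasurableSet C ∧ C ∉ I ∧ C ⊆ B ∧ C ⊆ f n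
    · obtain ⟨n, C, hC, hCpos, hCB, hCf⟩ := hex
      exact ⟨C, hC, hCpos, hCB, Or.inl (hCf.trans (subset_iUnion f n))⟩
    · have hcover : ∀ n, ∃ N : Set X, MeasurableSet N ∧ N ∈ I ∧ B ∩ f n ⊆ N := by
        intro n
        refine exists_measurable_cover_inter hI hccc hB fun C hC hCpos hCB => ?_
        obtain ⟨D, hD, hDpos, hDC, h | h⟩ := hf n C hC hCpos
        · exact absurd ⟨n, D, hD, hDpos, hDC.trans hCB, h⟩ hex
        · exact ⟨D, hD, hDpos, hDC, h⟩
      choose N hNm hNI hN using hcover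
      refine ⟨B \ ⋃ n, N n, hB.diff (MeasurableSet.iUnion hNm), fun hsmall => hpos ?_,
        sdiff_subset, Or.inr ?_⟩
      -- Otherwise `B` is covered by the sequence `B \ ⋃ n, N n`, `N 0`, `N 1`, … of sets in `I`.
      · refine hI.2.1 _ _ ?_ (hI.2.2 (fun k => Nat.casesOn k (B \ ⋃ n, N n) N) ?_)
        · intro x hx
          by_cases h : x ∈ ⋃ n, N n
          · obtain ⟨n, hn⟩ := mem_iUnion.1 h
            exact mem_iUnion.2 ⟨n + 1, hn⟩
          · exact mem_iUnion.2 ⟨0, hx, h⟩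
        · rintro (_ | n)
          · exact hsmall
          · exact hNI n
      · rintro x ⟨hxB, hxN⟩ hxf
        obtain ⟨n, hn⟩ := mem_iUnion.1 hxf
        exact hxN (mem_iUnion.2 ⟨n, hN n ⟨hxB, hn⟩⟩)
end

section
/- Let X be a nonempty Polish space, B ⊆ X a nonmeager Borel set, and E an equivalence relation on B which, viewed as a subset of X × X, is analytic. If every E-equivalence class is meager, then there is a perfect set P ⊆ B of pairwise E-inequivalent elements. -/
/-!
The argument follows the classical route through Baire category.

* The analytic set `E` has the Baire property (Lusin–Sierpiński,
  `baireMeasurableSet_of_analyticSet`). Writing `E` as the range of a continuous `f` on `ℕ^ℕ`,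
  replace the image of each basic cylinder by its closed `hull`, the set of points where it is
  nowhere locally meagre. Each hull is, up to a meagre set, the union of the hulls of the
  one-step extensions; off these countably many meagre sets, a point of the hull of `E` determines
  a branch whose value under `f` is that point.
* All sections of `E` are meagre, so `E` is meagre in `X × X` (Kuratowski–Ulam,
  `isMeagre_of_sections`).
* `B` is comeagre in a nonempty open set `U`, which has no isolated points because classes are
  meagre. So comeagrely many `(x, y) ∈ U × U` satisfy `x ∈ B`, `x ≠ y` and `(x, y) ∉ E`.
* Mycielski's theorem (`mycielski`) yields a continuous `φ : 2^ℕ → U` sending distinct points to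
  such pairs, and its range is the desired perfect set. No tree of open sets is needed: `C(2^ℕ, U)`
  is a Baire space and the generic `φ` works. Density holds since every `φ` is approximated by
  locally constant maps, whose finitely many values can be moved into general position.
-/

open MeasureTheory Set

/-- `E` is an equivalence relation on the set `B`, viewed as a set of pairs. -/
def IsEquivOn {X : Type*} (B : Set X) (E : Set (X × X)) : Prop :=
  E ⊆ B ×ˢ B ∧ (∀ x ∈ B, (x, x) ∈ E) ∧ (∀ x y, (x, y) ∈ E → (y, x) ∈ E) ∧
    ∀ x y z, (x, y) ∈ E → (y, z) ∈ E → (x, z) ∈ E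

namespace PspMeager

open Filter Topology TopologicalSpace

/-! ### Analytic sets have the Baire property -/

section Hull

variable {Z : Type*} [TopologicalSpace Z]

/-- The points at which `A` is nowhere locally meagre: `z` belongs to `hull A` when `A` is
nonmeagre in every open neighbourhood of `z`. -/
def hull (A : Set Z) : Set Z := {z | ∀ V, IsOpen V → z ∈ V → ¬ IsMeagre (A ∩ V)}

lemma isClosed_hull (A : Set Z) : IsClosed (hull A) := by
  rw [← isOpen_compl_iff, isOpen_iff_forall_mem_open]
  intro z hz
  simp only [hull, mem_compl_iff, mem_ofPred_eq, not_forall, not_not] at hz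
  obtain ⟨V, hV, hzV, hm⟩ := hz
  exact ⟨V, fun w hw h => h V hV hw hm, hV, hzV⟩

lemma hull_subset_closure (A : Set Z) : hull A ⊆ closure A := by
  intro z hz
  rw [mem_closure_iff]
  intro V hV hzV
  rw [inter_comm]
  exact nonempty_of_not_isMeagre (hz V hV hzV)

lemma isMeagre_diff_hull [SecondCountableTopology Z] (A : Set Z) : IsMeagre (A \ hull A) := by
  have h : IsMeagre (⋃ V ∈ {V ∈ countableBasis Z | IsMeagre (A ∩ V)}, A ∩ V) :=
    isMeagre_biUnion ((countable_countableBasis Z).mono fun V hV => hV.1) fun V hV => hV.2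
  refine h.mono ?_
  rintro z ⟨hzA, hz⟩
  simp only [hull, mem_ofPred_eq, not_forall, not_not] at hz
  obtain ⟨V, hV, hzV, hm⟩ := hz
  obtain ⟨W, hW, hzW, hWV⟩ := (isBasis_countableBasis Z).exists_subset_of_mem_open hzV hV
  exact mem_biUnion (x := W) ⟨hW, hm.mono (inter_subset_inter_right _ hWV)⟩ ⟨hzA, hzW⟩

/-- `hull` commutes with countable unions up to a meagre set: an open set in which the difference
is comeagre would be one in which `⋃ n, A n` is meagre. -/
lemma isMeagre_hull_iUnion_diff [SecondCountableTopology Z] (A : ℕ → Set Z) :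
    IsMeagre (hull (⋃ n, A n) \ ⋃ n, hull (A n)) := by
  set C := hull (⋃ n, A n) \ ⋃ n, hull (A n) with hC
  have hCB : BaireMeasurableSet C :=
    (isClosed_hull _).isOpen_compl.baireMeasurableSet.of_compl.diff
      (.iUnion fun n => (isClosed_hull _).isOpen_compl.baireMeasurableSet.of_compl)
  obtain ⟨V, hV, hCV⟩ := hCB.residualEq_isOpen
  rw [eventuallyEq_set] at hCV
  have hm : IsMeagre ((⋃ n, A n) ∩ V) := by
    have h1 : IsMeagre (⋃ n, A n \ hull (A n)) := isMeagre_iUnion fun n => isMeagre_diff_hull _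
    unfold IsMeagre at h1 ⊢
    filter_upwards [hCV, h1] with z hz h1 ⟨hzA, hzV⟩
    have hzC := hz.2 hzV
    obtain ⟨n, hn⟩ := mem_iUnion.1 hzA
    exact h1 (mem_iUnion.2 ⟨n, hn, fun h => hzC.2 (mem_iUnion.2 ⟨n, h⟩)⟩)
  unfold IsMeagre
  filter_upwards [hCV] with z hz hzC
  exact hzC.1 V hV (hz.1 hzC) hm

/-- **Lusin–Sierpiński**: analytic sets have the Baire property. -/
lemma baireMeasurableSet_of_analyticSet [SecondCountableTopology Z] [T3Space Z] {A : Set Z}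
    (hA : AnalyticSet A) : BaireMeasurableSet A := by
  rw [AnalyticSet] at hA
  obtain rfl | ⟨f, hf, rfl⟩ := hA
  · exact isOpen_empty.baireMeasurableSet
  let S : List ℕ → Set Z := fun l => f '' {y | PiNat.res y l.length = l}
  have hS : ∀ l, S l = ⋃ n, S (n :: l) := by
    intro l
    simp only [S, ← image_iUnion]
    congr 1
    ext y
    simp [PiNat.res_succ]
  have hS0 : S [] = range f := by simp [S]
  have hM : IsMeagre (⋃ l, (hull (S l) \ ⋃ n, hull (S (n :: l)))) := by
    refine isMeagre_iUnion fun l => ?_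
    have := isMeagre_hull_iUnion_diff fun n => S (n :: l)
    rwa [← hS] at this
  have key : hull (range f) \ ⋃ l, (hull (S l) \ ⋃ n, hull (S (n :: l))) ⊆ range f := by
    rintro z ⟨hz, hzM⟩
    have step : ∀ l, ∃ n, z ∈ hull (S l) → z ∈ hull (S (n :: l)) := by
      intro l
      by_cases hl : z ∈ hull (S l)
      · by_contra! hcon
        exact hzM (mem_iUnion.2 ⟨l, hl, fun h => by
          obtain ⟨n, hn⟩ := mem_iUnion.1 h
          exact (hcon n).2 hn⟩)
      · exact ⟨0, fun h => absurd h hl⟩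
    choose g hg using step
    let L : ℕ → List ℕ := fun k => Nat.rec [] (fun _ l => g l :: l) k
    let y : ℕ → ℕ := fun k => g (L k)
    have hL : ∀ k, PiNat.res y k = L k := by
      intro k
      induction k with
      | zero => rfl
      | succ k ih => rw [PiNat.res_succ, ih]
    have hzL : ∀ k, z ∈ hull (S (L k)) := by
      intro k
      induction k with
      | zero => rw [← hS0] at hz; exact hz
      | succ k ih => exact hg _ ih
    refine ⟨y, ?_⟩
    by_contra hne
    -- A closed neighbourhood `F` of `f y` omitting `z` contains the image of a cylinder around `y`.
    obtain ⟨F, hF, hFc, hFz⟩ := exists_mem_nhds_isClosed_subset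
      (isOpen_compl_singleton (x := z).mem_nhds (show f y ∈ ({z} : Set Z)ᶜ from hne))
    obtain ⟨_, ⟨w, k, rfl⟩, hyw, hw⟩ :=
      (PiNat.isTopologicalBasis_cylinders (fun _ => ℕ)).mem_nhds_iff.1
        (hf.continuousAt.preimage_mem_nhds hF)
    rw [← PiNat.mem_cylinder_iff_eq.1 hyw] at hw
    have hsub : S (L k) ⊆ F := by
      rintro _ ⟨x, hx, rfl⟩
      apply hw
      rw [PiNat.cylinder_eq_res]
      have hx' : PiNat.res x (L k).length = L k := hx
      rw [← hL, PiNat.res_length] at hx'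
      exact hx'
    exact hFz (closure_minimal hsub hFc (hull_subset_closure _ (hzL k))) rfl
  refine BaireMeasurableSet.congr
    (isClosed_hull (range f)).isOpen_compl.baireMeasurableSet.of_compl ?_
  rw [eventuallyEq_set]
  have h1 := isMeagre_diff_hull (range f)
  unfold IsMeagre at h1 hM
  filter_upwards [h1, hM] with z hz1 hz2
  exact ⟨fun h => key ⟨h, hz2⟩, fun h => by_contra fun h' => hz1 ⟨h, h'⟩⟩

end Hull

/-! ### The Kuratowski–Ulam theorem -/

section KuratowskiUlam

variable {X Y : Type*} [TopologicalSpace X] [TopologicalSpace Y]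

/-- **Kuratowski–Ulam**, the direction valid without any Baire property: a comeagre set in a
product has comeagre sections over comeagrely many points. -/
lemma eventually_residual_section [SecondCountableTopology Y] {s : Set (X × Y)}
    (hs : s ∈ residual (X × Y)) : ∀ᶠ x in residual X, {y | (x, y) ∈ s} ∈ residual Y := by
  obtain ⟨S, hSo, hSd, hSc, hSs⟩ := mem_residual_iff.1 hs
  have h : ∀ D ∈ S, ∀ W ∈ countableBasis Y, ∀ᶠ x in residual X, ∃ y ∈ W, (x, y) ∈ D := by
    intro D hD W hW
    have hWo := isOpen_of_mem_countableBasis hW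
    have hWn := nonempty_of_mem_countableBasis hW
    have : {x | ∃ y ∈ W, (x, y) ∈ D} = Prod.fst '' (D ∩ univ ×ˢ W) := by
      ext x; simp [and_comm]
    refine residual_of_dense_open (s := {x | ∃ y ∈ W, (x, y) ∈ D}) ?_ ?_
    · rw [this]
      exact isOpenMap_fst _ ((hSo D hD).inter (isOpen_univ.prod hWo))
    · rw [dense_iff_inter_open]
      intro U hU hUn
      obtain ⟨⟨x, y⟩, ⟨hx, hy⟩, hxy⟩ :=
        (hSd D hD).inter_open_nonempty _ (hU.prod hWo) (hUn.prod hWn)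
      exact ⟨x, hx, y, hy, hxy⟩
  have h' := (eventually_countable_ball hSc).2 fun D hD =>
    (eventually_countable_ball (countable_countableBasis Y)).2 (h D hD)
  filter_upwards [h'] with x hx
  refine mem_of_superset ((countable_bInter_mem hSc).2 fun D hD =>
    residual_of_dense_open (s := {y | (x, y) ∈ D})
      ((hSo D hD).preimage (by fun_prop)) ?_) ?_
  · rw [(isBasis_countableBasis Y).dense_iff]
    intro W hW _
    obtain ⟨y, hy, hxy⟩ := hx D hD W hW
    exact ⟨y, hy, hxy⟩
  · intro y hy
    exact hSs fun D hD => mem_iInter₂.1 hy D hD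

/-- **Kuratowski–Ulam**: a set with the Baire property all of whose sections are meagre is
itself meagre. -/
lemma isMeagre_of_sections [SecondCountableTopology Y] [BaireSpace X] [BaireSpace Y]
    {s : Set (X × Y)} (hs : BaireMeasurableSet s) (h : ∀ x, IsMeagre {y | (x, y) ∈ s}) :
    IsMeagre s := by
  obtain ⟨O, hO, hsO⟩ := hs.residualEq_isOpen
  rw [eventuallyEq_set] at hsO
  have hOe : O = ∅ := by
    by_contra hne
    obtain ⟨⟨x₀, y₀⟩, hp⟩ := nonempty_iff_ne_empty.2 hne
    obtain ⟨V, W, hV, hW, hx, hy, hVW⟩ := isOpen_prod_iff.1 hO x₀ y₀ hp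
    obtain ⟨x, hxV, hxs⟩ := (dense_of_mem_residual
      (eventually_residual_section hsO)).inter_open_nonempty V hV ⟨x₀, hx⟩
    refine not_isMeagre_of_isOpen hW ⟨y₀, hy⟩ ?_
    have h1 := h x
    unfold IsMeagre at h1 ⊢
    filter_upwards [hxs, h1] with y hy1 hy2 hyW
    exact hy2 (hy1.2 (hVW ⟨hxV, hyW⟩))
  unfold IsMeagre
  filter_upwards [hsO] with p hp hps
  simpa [hOe] using hp.1 hps

end KuratowskiUlam

/-! ### Mycielski's theorem -/

section Mycielski

/-- Uniform continuity on the Cantor space, in terms of initial segments. -/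
lemma exists_dist_lt_of_agree {X : Type*} [MetricSpace X] {φ : (ℕ → Bool) → X}
    (hφ : Continuous φ) {ε : ℝ} (hε : 0 < ε) :
    ∃ n : ℕ, ∀ a b : ℕ → Bool, (∀ i < n, a i = b i) → dist (φ a) (φ b) < ε := by
  let _ : MetricSpace (ℕ → Bool) :=
    PiNat.metricSpaceOfDiscreteUniformity fun _ => DiscreteUniformity.eq_principal_setRelId Bool
  obtain ⟨δ, hδ, h⟩ :=
    Metric.uniformContinuous_iff.1 (CompactSpace.uniformContinuous_of_continuous hφ) ε hε
  obtain ⟨n, hn⟩ := exists_pow_lt_of_lt_one hδ (show (1 / 2 : ℝ) < 1 by norm_num)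
  exact ⟨n, fun a b hab => h ((PiNat.mem_cylinder_iff_dist_le.1 hab).trans_lt hn)⟩

lemma dense_pair_mem {ι X : Type*} [TopologicalSpace X] {D : Set (X × X)}
    (hDd : Dense D) {s t : ι} (hst : s ≠ t) : Dense {x : ι → X | (x s, x t) ∈ D} := by
  classical
  rw [dense_iff_inter_open]
  rintro W hW ⟨x, hx⟩
  let g : X × X → ι → X := fun p => Function.update (Function.update x s p.1) t p.2
  have hg : Continuous g := by fun_prop
  obtain ⟨⟨u, v⟩, hW', hD⟩ := hDd.inter_open_nonempty _ (hW.preimage hg)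
    ⟨(x s, x t), by simpa [g] using hx⟩
  exact ⟨g (u, v), hW', by simpa [g, hst] using hD⟩

/-- **Mycielski's theorem**, by a Baire category argument in the space `C(2^ℕ, X)`: the generic
continuous map sends distinct points to pairs in a given comeagre set. -/
lemma mycielski {X : Type*} [MetricSpace X] [CompleteSpace X] [Nonempty X] {R : Set (X × X)}
    (hR : R ∈ residual (X × X)) :
    ∃ φ : C(ℕ → Bool, X), ∀ a b, a ≠ b → (φ a, φ b) ∈ R := by
  obtain ⟨S, hSo, hSd, hSc, hSs⟩ := mem_residual_iff.1 hR
  have main : ∀ D ∈ S, ∀ m : ℕ, ∀ᶠ φ in residual C(ℕ → Bool, X),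
      ∀ a b : ℕ → Bool, a m ≠ b m → (φ a, φ b) ∈ D := by
    intro D hD m
    refine residual_of_dense_open
      (s := {φ : C(ℕ → Bool, X) | ∀ a b : ℕ → Bool, a m ≠ b m → (φ a, φ b) ∈ D}) ?_ ?_
    · let K : Set ((ℕ → Bool) × (ℕ → Bool)) := {p | p.1 m ≠ p.2 m}
      have hK : IsCompact K := by
        have : IsClosed K := (isOpen_discrete {q : Bool × Bool | q.1 = q.2}).isClosed_compl.preimage
          (f := fun p : (ℕ → Bool) × (ℕ → Bool) => (p.1 m, p.2 m)) (by fun_prop)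
        exact this.isCompact
      have hc : Continuous fun φ : C(ℕ → Bool, X) => φ.prodMap φ :=
        ContinuousMap.continuous_of_continuous_uncurry _ <| by
          change Continuous fun q : C(ℕ → Bool, X) × ((ℕ → Bool) × (ℕ → Bool)) =>
            (q.1 q.2.1, q.1 q.2.2)
          fun_prop
      have := (ContinuousMap.isOpen_setOfPred_mapsTo hK (hSo D hD)).preimage hc
      convert this using 1
      ext φ
      simp [K, MapsTo]
    · rw [Metric.dense_iff]
      intro ψ ε hε
      obtain ⟨n, hn⟩ := exists_dist_lt_of_agree ψ.continuous (half_pos (half_pos hε))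
      set N := max n (m + 1) with hN
      let e : (Fin N → Bool) → ℕ → Bool := fun s i => if h : i < N then s ⟨i, h⟩ else false
      let r : (ℕ → Bool) → Fin N → Bool := fun a i => a i
      have hT : ∀ᶠ x in residual ((Fin N → Bool) → X), ∀ s t, s ≠ t → (x s, x t) ∈ D := by
        simp only [eventually_countable_forall]
        intro s t hst
        exact residual_of_dense_open ((hSo D hD).preimage
          (f := fun x : (Fin N → Bool) → X => (x s, x t)) (by fun_prop))
          (dense_pair_mem (hSd D hD) hst)
      obtain ⟨x, hx, hxT⟩ := (dense_of_mem_residual hT).inter_open_nonempty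
        (Metric.ball (fun s => ψ (e s)) (ε / 4)) Metric.isOpen_ball
        ⟨_, Metric.mem_ball_self (by positivity)⟩
      have hr : Continuous r := by fun_prop
      let φ : C(ℕ → Bool, X) := ⟨fun a => x (r a), continuous_of_discreteTopology.comp hr⟩
      refine ⟨φ, ?_, fun a b hab => hxT _ _ fun h => hab ?_⟩
      · rw [Metric.mem_ball]
        refine lt_of_le_of_lt ((ContinuousMap.dist_le (half_pos hε).le).2 fun a => ?_)
          (half_lt_self hε)
        have h1 : dist (x (r a)) (ψ (e (r a))) < ε / 4 :=
          (dist_le_pi_dist x (fun s => ψ (e s)) (r a)).trans_lt hx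
        have h2 : dist (ψ (e (r a))) (ψ a) < ε / 2 / 2 := hn _ _ fun i hi => by
          have : i < N := lt_of_lt_of_le hi (le_max_left _ _)
          simp [e, r, this]
        have h3 := dist_triangle (x (r a)) (ψ (e (r a))) (ψ a)
        change dist (x (r a)) (ψ a) ≤ _
        linarith
      · exact congrFun h ⟨m, lt_of_lt_of_le (Nat.lt_succ_self m) (le_max_right _ _)⟩
  have h := (eventually_countable_ball hSc).2 fun D hD => eventually_countable_forall.2 (main D hD)
  have : Nonempty C(ℕ → Bool, X) := ⟨.const _ (Classical.arbitrary X)⟩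
  obtain ⟨φ, hφ⟩ := (dense_of_mem_residual h).nonempty
  refine ⟨φ, fun a b hab => hSs fun D hD => ?_⟩
  obtain ⟨m, hm⟩ := Function.ne_iff.1 hab
  exact hφ D hD m a b hm

end Mycielski

/-! ### Perfect sets of inequivalent elements -/

/-- An injective continuous image of the Cantor space is perfect. -/
lemma perfect_range {X : Type*} [TopologicalSpace X] [T2Space X] {φ : (ℕ → Bool) → X}
    (hφ : Continuous φ) (hinj : Function.Injective φ) : Perfect (range φ) := by
  refine ⟨(isCompact_range hφ).isClosed, preperfect_iff_nhds.2 ?_⟩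
  rintro _ ⟨a, rfl⟩ U hU
  obtain ⟨_, ⟨w, k, rfl⟩, haw, hw⟩ :=
    (PiNat.isTopologicalBasis_cylinders (fun _ => Bool)).mem_nhds_iff.1
      (hφ.continuousAt.preimage_mem_nhds hU)
  rw [← PiNat.mem_cylinder_iff_eq.1 haw] at hw
  refine ⟨φ (Function.update a k (!a k)), ⟨hw (PiNat.update_mem_cylinder _ _ _), mem_range_self _⟩,
    fun h => ?_⟩
  have := congrFun (hinj h) k
  simp at this

end PspMeager

open PspMeager Filter Topology in
theorem psp_meager_analytic {X : Type*} [TopologicalSpace X] [PolishSpace X] [Nonempty X]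
    [MeasurableSpace X] [BorelSpace X]
    (B : Set X) (hBborel : MeasurableSet B) (hBnonmeager : ¬ IsMeagre B)
    (E : Set (X × X)) (hE : IsEquivOn B E) (hEan : AnalyticSet E)
    (hclasses : ∀ x ∈ B, IsMeagre {y | (x, y) ∈ E}) :
    ∃ P : Set X, P ⊆ B ∧ Perfect P ∧ P.Nonempty ∧
      ∀ x ∈ P, ∀ y ∈ P, x ≠ y → (x, y) ∉ E := by
  obtain ⟨hEB, hrefl, -, -⟩ := hE
  have hEm : IsMeagre E := by
    refine isMeagre_of_sections (baireMeasurableSet_of_analyticSet hEan) fun x => ?_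
    by_cases hx : x ∈ B
    · exact hclasses x hx
    · convert IsMeagre.empty using 1
      ext y
      simpa using fun h => hx (hEB h).1
  obtain ⟨U, hU, hBU⟩ := hBborel.residualEq_isOpen
  rw [eventuallyEq_set] at hBU
  have hUne : U.Nonempty := by
    by_contra hne
    rw [not_nonempty_iff_eq_empty] at hne
    refine hBnonmeager ?_
    unfold IsMeagre
    filter_upwards [hBU] with x hx hxB
    simpa [hne] using hx.1 hxB
  -- An isolated point of `U` would lie in `B` and have a nonmeagre class.
  have hiso : ∀ x ∈ U, ¬ IsOpen ({x} : Set X) := by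
    intro x hxU hx
    have hxB : x ∈ B := by
      obtain ⟨y, hy, hyB⟩ := (dense_of_mem_residual hBU).inter_open_nonempty _ hx ⟨x, rfl⟩
      rw [mem_singleton_iff] at hy
      subst hy
      exact hyB.2 hxU
    refine not_isMeagre_of_isOpen hx ⟨x, rfl⟩ ((hclasses x hxB).mono ?_)
    rintro _ rfl
    exact hrefl _ hxB
  have : PolishSpace U := hU.polishSpace
  have : Nonempty U := hUne.to_subtype
  let _ := TopologicalSpace.upgradeIsCompletelyMetrizable U
  have hv : IsOpenMap (Subtype.val : U → X) := hU.isOpenMap_subtype_val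
  have hR1 : ∀ᶠ p : U × U in residual (U × U), ((p.1 : X), (p.2 : X)) ∉ E :=
    hEm.preimage_of_isOpenMap (f := Prod.map Subtype.val Subtype.val)
      (by fun_prop) (hv.prodMap hv)
  have hR2 : ∀ᶠ p : U × U in residual (U × U), (p.1 : X) ∈ B := by
    have := tendsto_residual_of_isOpenMap (f := fun p : U × U => (p.1 : X)) (by fun_prop)
      (hv.comp isOpenMap_fst) hBU
    filter_upwards [this] with p hp
    exact hp.2 p.1.2
  have hR3 : ∀ᶠ p : U × U in residual (U × U), p.1 ≠ p.2 := by
    refine residual_of_dense_open (s := {p : U × U | p.1 ≠ p.2})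
      (isOpen_ne_fun continuous_fst continuous_snd) ?_
    rw [dense_iff_inter_open]
    rintro W hW ⟨⟨x, y⟩, hxy⟩
    by_contra hcon
    obtain ⟨V₁, V₂, h1, h2, hx, hy, hV⟩ := isOpen_prod_iff.1 hW x y hxy
    have heq : ∀ u ∈ V₁, ∀ v ∈ V₂, u = v := fun u hu v hv => by
      by_contra hne
      exact hcon ⟨(u, v), hV ⟨hu, hv⟩, hne⟩
    have hVx : V₁ = {x} := by
      ext u
      refine ⟨fun hu => (heq u hu y hy).trans (heq x hx y hy).symm, ?_⟩
      rintro rfl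
      exact hx
    refine hiso x x.2 ?_
    have := hv V₁ h1
    rwa [hVx, image_singleton] at this
  obtain ⟨φ, hφ⟩ := mycielski (hR1.and (hR2.and hR3))
  refine ⟨range fun a => (φ a : X), ?_, perfect_range (by fun_prop) ?_, range_nonempty _, ?_⟩
  · rintro _ ⟨a, rfl⟩
    obtain ⟨b, hb⟩ := exists_ne a
    exact (hφ a b hb.symm).2.1
  · intro a b hab
    by_contra hne
    exact (hφ a b hne).2.2 (Subtype.ext hab)
  · rintro _ ⟨a, rfl⟩ _ ⟨b, rfl⟩ hne
    exact (hφ a b fun h => hne (by rw [h])).1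
end

section
/- Let B ⊆ ℝ be a Borel set of positive Lebesgue measure and let E be an equivalence relation on B which, viewed as a subset of ℝ × ℝ, is analytic. If every E-equivalence class is Lebesgue null, then there is a perfect set P ⊆ B of pairwise E-inequivalent elements. -/
/-!
Since `E` is analytic with null sections, it is null in the plane: otherwise it would contain a
compact set of positive measure (`exists_compact_of_range_pos`), contradicting Fubini's theorem.
The rest is Mycielski's construction of a perfect set whose pairs of distinct points avoid a planar
null set.

Fix a compact `K ⊆ B` of positive measure. The construction produces a decreasing sequence of
closed sets `W k` of sequences of reals, where `W k` depends on the coordinates `0, …, k` only and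
has positive measure in them. At each step one coordinate `p` is split into two, `p` and `k + 1`,
such that both resulting tuples lie in the old set. Positivity survives because on each line in
direction `p` a set of measure `m` is replaced by a set of measure `m ^ 2`, from which a null set,
covering the pairs in `E`, may be removed (`coordLaw_split_ne_zero`). By countable additivity the
two new coordinates can even be kept outside a fixed open neighbourhood of `E`, and all coordinates
can be confined to short intervals (`GoodStage.step`).

By compactness there is a point `a` in all `W k`. The closure of `{a i}` is the required set. It is
perfect because every `a i` is approximated by the coordinates split off from `i`. Two distinct
points of it are limits of coordinates with different ancestors at some stage `n`; by
`exists_mem_ancestor` the pair lies in the closure of the pairs of coordinates at stage `n`, which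
is disjoint from `E`.
-/

open MeasureTheory Set

open scoped Topology ENNReal

/-! ### Analytic sets with null sections are null -/

/-- Inner regularity of analytic sets: one of positive outer measure contains a compact set of
positive measure. The outer measure of `f '' S` is continuous along increasing unions, so the
coordinates of the Baire space can be bounded one after the other while the outer measure stays
above a fixed `c > 0`; the compact set is the image of the resulting compact box. -/
theorem exists_compact_of_range_pos {X : Type*} [MetricSpace X] [MeasurableSpace X]
    [BorelSpace X] (μ : Measure X) [IsFiniteMeasure μ] (f : (ℕ → ℕ) → X) (hf : Continuous f)
    (hpos : μ (range f) ≠ 0) : ∃ K ⊆ range f, IsCompact K ∧ μ K ≠ 0 := by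
  obtain ⟨c, hc0, hc⟩ := exists_between (pos_iff_ne_zero.2 hpos)
  have step : ∀ (k : ℕ) (S : {S : Set (ℕ → ℕ) // c < μ (f '' S)}),
      ∃ m, c < μ (f '' (S.1 ∩ {x | x k ≤ m})) := by
    rintro k ⟨S, hS⟩
    have hU : f '' S = ⋃ m, f '' (S ∩ {x | x k ≤ m}) := by
      rw [← image_iUnion, ← inter_iUnion]
      congr 1
      refine (inter_eq_left.2 fun x _ => mem_iUnion.2 ⟨x k, le_refl (x k)⟩).symm
    have hmono : Monotone fun m => f '' (S ∩ {x : ℕ → ℕ | x k ≤ m}) := fun m m' h =>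
      image_mono (inter_subset_inter_right _ fun x (hx : x k ≤ m) => hx.trans h)
    rw [hU, hmono.measure_iUnion] at hS
    exact lt_iSup_iff.1 hS
  choose m hm using step
  let T : ℕ → {S : Set (ℕ → ℕ) // c < μ (f '' S)} := fun k =>
    Nat.rec ⟨univ, by rwa [image_univ]⟩ (fun k S => ⟨S.1 ∩ {x | x k ≤ m k S}, hm k S⟩) k
  let M : ℕ → ℕ := fun k => m k (T k)
  have hT : ∀ k, (T k).1 = {x | ∀ i < k, x i ≤ M i} := by
    intro k
    induction k with
    | zero => ext x; simp [T]
    | succ k ih =>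
      have : (T (k + 1)).1 = (T k).1 ∩ {x | x k ≤ M k} := rfl
      rw [this, ih]
      ext x
      simp only [mem_inter_iff, mem_ofPred_eq, Nat.lt_succ_iff_lt_or_eq]
      constructor
      · rintro ⟨h1, h2⟩ i (hi | rfl)
        exacts [h1 i hi, h2]
      · exact fun h => ⟨fun i hi => h i (.inl hi), h k (.inr rfl)⟩
  let C : Set (ℕ → ℕ) := univ.pi fun i => Iic (M i)
  have hC : IsCompact C := isCompact_univ_pi fun i => (finite_Iic (M i)).isCompact
  have hK : IsCompact (f '' C) := hC.image hf
  -- every neighbourhood of the compact set contains a finite-stage approximation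
  have key : ∀ U, IsOpen U → f '' C ⊆ U → ∃ k, f '' (T k).1 ⊆ U := by
    intro U hU hCU
    have hV : IsOpen (f ⁻¹' U) := hU.preimage hf
    have hCV : C ⊆ f ⁻¹' U := image_subset_iff.1 hCU
    have : ∀ x ∈ C, ∃ n, PiNat.cylinder x n ⊆ f ⁻¹' U := by
      intro x hx
      obtain ⟨_, ⟨y, n, rfl⟩, hxs, hs⟩ :=
        (PiNat.isTopologicalBasis_cylinders (fun _ : ℕ => ℕ)).exists_subset_of_mem_open
          (hCV hx) hV
      exact ⟨n, by rwa [← PiNat.mem_cylinder_iff_eq.1 hxs] at hs⟩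
    choose! n hn using this
    obtain ⟨t, htC, hcov⟩ := hC.elim_nhds_subcover (fun x => PiNat.cylinder x (n x))
      fun x _ => (PiNat.isOpen_cylinder _ x (n x)).mem_nhds (PiNat.self_mem_cylinder x (n x))
    refine ⟨t.sup n, ?_⟩
    rintro _ ⟨x, hx, rfl⟩
    rw [hT] at hx
    -- truncating `x` to the box does not change the coordinates that decide membership in `U`
    let x' : ℕ → ℕ := fun i => min (x i) (M i)
    have hx' : x' ∈ C := fun i _ => mem_Iic.2 (min_le_right (x i) (M i))
    obtain ⟨y, hy, hyx⟩ := mem_iUnion₂.1 (hcov hx')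
    refine hn y (htC y hy) ?_
    intro i hi
    have h1 := hyx i hi
    have h2 := hx i (hi.trans_le (Finset.le_sup hy))
    rw [← h1]
    exact (min_eq_left h2).symm
  refine ⟨f '' C, image_subset_range _ _, hK, ?_⟩
  have hle : ∀ U, IsOpen U → f '' C ⊆ U → c ≤ μ U := by
    intro U hU h
    obtain ⟨k, hk⟩ := key U hU h
    exact (T k).2.le.trans (measure_mono hk)
  intro h0
  obtain ⟨U, hU1, hU2, hU3⟩ := (f '' C).exists_isOpen_lt_of_lt c (by rw [h0]; exact hc0)
  exact absurd (hle U hU2 hU1) (not_le.2 hU3)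

/-- Fubini's theorem for an analytic set, which is applied to a compact subset of it, so that
measurability of the analytic set itself is not needed. -/
theorem analytic_null_of_sections (E : Set (ℝ × ℝ)) (hE : AnalyticSet E)
    (hs : ∀ x, volume {y | (x, y) ∈ E} = 0) : volume E = 0 := by
  rw [AnalyticSet] at hE
  obtain rfl | ⟨f, hf, rfl⟩ := hE
  · simp
  by_contra hne
  have h1 : (volume : Measure (ℝ × ℝ)).toFinite (range f) ≠ 0 := fun h =>
    hne (absolutelyContinuous_toFinite _ h)
  obtain ⟨K, hKE, hK, hK0⟩ := exists_compact_of_range_pos _ f hf h1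
  apply hK0
  apply toFinite_absolutelyContinuous
  rw [Measure.volume_eq_prod, Measure.measure_prod_null hK.measurableSet]
  exact .of_forall fun x => measure_mono_null (fun y hy => hKE hy) (hs x)

/-- A symmetric null set has symmetric open neighbourhoods with null intersection. -/
theorem exists_open_symm (E : Set (ℝ × ℝ)) (hE : volume E = 0)
    (hsymm : ∀ x y, (x, y) ∈ E → (y, x) ∈ E) :
    ∃ V : ℕ → Set (ℝ × ℝ), (∀ m, IsOpen (V m)) ∧ (∀ m, E ⊆ V m) ∧
      (∀ m x y, (x, y) ∈ V m → (y, x) ∈ V m) ∧ volume (⋂ m, V m) = 0 := by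
  have : ∀ m : ℕ, ∃ U, E ⊆ U ∧ IsOpen U ∧ volume U ≤ ((m : ℝ≥0∞) + 1)⁻¹ := by
    intro m
    obtain ⟨U, h1, h2, h3⟩ := E.exists_isOpen_le_add volume (ε := ((m : ℝ≥0∞) + 1)⁻¹)
      (by simp)
    exact ⟨U, h1, h2, by simpa [hE] using h3⟩
  choose U h1 h2 h3 using this
  refine ⟨fun m => U m ∩ Prod.swap ⁻¹' U m, fun m => (h2 m).inter ((h2 m).preimage continuous_swap),
    fun m => ?_, fun m x y h => ⟨h.2, h.1⟩, ?_⟩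
  · rintro ⟨x, y⟩ h
    exact ⟨h1 m h, h1 m (hsymm _ _ h)⟩
  · refine le_antisymm (ge_of_tendsto' (x := Filter.atTop)
      (f := fun m : ℕ => ((m : ℝ≥0∞) + 1)⁻¹) ?_ fun m => ?_) bot_le
    · have := (Filter.tendsto_add_atTop_iff_nat 1).2 ENNReal.tendsto_inv_nat_nhds_zero
      simpa using this
    · exact (measure_mono ((iInter_subset _ m).trans inter_subset_left)).trans (h3 m)

/-! ### Doubling a coordinate of a set of positive measure -/

/-- Lebesgue measure on the first `n` coordinates of `ℕ → ℝ`, with the remaining coordinates frozen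
to those of `x₀`. Keeping the ambient space `ℕ → ℝ` fixed avoids reindexing when `n` grows. -/
noncomputable def coordLaw (x₀ : ℕ → ℝ) (n : ℕ) : Measure (ℕ → ℝ) :=
  (Measure.pi fun _ : Finset.range n => (volume : Measure ℝ)).map
    (Function.updateFinset x₀ (Finset.range n))

theorem coordLaw_apply (x₀ : ℕ → ℝ) (n : ℕ) {W : Set (ℕ → ℝ)} (hW : MeasurableSet W) :
    coordLaw x₀ n W =
      lmarginal (fun _ => volume) (Finset.range n) (W.indicator fun _ => 1) x₀ := by
  have hm : Measurable (Function.updateFinset x₀ (Finset.range n)) := measurable_updateFinset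
  rw [← lintegral_indicator_one hW, coordLaw, lmarginal, lintegral_map _ hm]
  · rfl
  · exact measurable_one.indicator hW

theorem lmarginal_sq_ne_zero (s : Finset ℕ) (g : (ℕ → ℝ) → ℝ≥0∞) (hg : Measurable g)
    (x : ℕ → ℝ) (h : lmarginal (fun _ => (volume : Measure ℝ)) s g x ≠ 0) :
    lmarginal (fun _ => (volume : Measure ℝ)) s (fun z => g z * g z) x ≠ 0 := by
  have hm : Measurable fun y => g (Function.updateFinset x s y) :=
    hg.comp measurable_updateFinset
  contrapose! h
  have h' := (lintegral_eq_zero_iff (hm.mul hm)).1 h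
  rw [lmarginal, lintegral_eq_zero_iff hm]
  filter_upwards [h'] with y hy
  simpa using hy

/-- Let `W` be a set of positive measure that depends on the first `n` coordinates only. If the
coordinate `p` is doubled, the tuples both of whose versions lie in `W`, and whose two copies of
that coordinate avoid a planar null set, still have positive measure: over fixed values of the
other coordinates, the fibre is the square of the fibre of `W`, up to a null set. -/
theorem coordLaw_split_ne_zero (x₀ : ℕ → ℝ) (n p : ℕ) (hp : p < n) (W : Set (ℕ → ℝ))
    (hW : MeasurableSet W)
    (hdep : ∀ z z' : ℕ → ℝ, (∀ i < n, z i = z' i) → z ∈ W → z' ∈ W)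
    (hpos : coordLaw x₀ n W ≠ 0) (N : Set (ℝ × ℝ)) (hN : MeasurableSet N)
    (hN0 : volume N = 0) :
    coordLaw x₀ (n + 1)
      {z | z ∈ W ∧ Function.update z p (z n) ∈ W ∧ (z p, z n) ∉ N} ≠ 0 := by
  have hup : Measurable fun z : ℕ → ℝ => Function.update z p (z n) := by
    rw [measurable_pi_iff]
    intro i
    by_cases h : i = p
    · subst h; simpa using measurable_pi_apply n
    · simpa [Function.update_of_ne h] using measurable_pi_apply i
  set T : Set (ℕ → ℝ) := {z | z ∈ W ∧ Function.update z p (z n) ∈ W ∧ (z p, z n) ∉ N} with hTdef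
  have hT : MeasurableSet T :=
    have hpair : Measurable fun z : ℕ → ℝ => (z p, z n) :=
      (measurable_pi_apply p).prodMk (measurable_pi_apply n)
    hW.inter ((hup hW).inter (hpair hN.compl))
  rw [coordLaw_apply _ _ hW] at hpos
  rw [coordLaw_apply _ _ hT]
  have hfT : Measurable (T.indicator fun _ => (1 : ℝ≥0∞)) := measurable_one.indicator hT
  have hfW : Measurable (W.indicator fun _ => (1 : ℝ≥0∞)) := measurable_one.indicator hW
  have hmT : Measurable fun x : ℕ → ℝ =>
      ∫⁻ b, T.indicator (fun _ => (1 : ℝ≥0∞)) (Function.update x n b) := by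
    have := hfT.lmarginal (fun _ => (volume : Measure ℝ)) (s := {n})
    rwa [lmarginal_singleton] at this
  have hmW : Measurable fun x : ℕ → ℝ =>
      ∫⁻ b, W.indicator (fun _ => (1 : ℝ≥0∞)) (Function.update x p b) := by
    have := hfW.lmarginal (fun _ => (volume : Measure ℝ)) (s := {p})
    rwa [lmarginal_singleton] at this
  have hpm : p ∈ Finset.range n := Finset.mem_range.2 hp
  rw [lmarginal_erase' _ hfW hpm] at hpos
  rw [Finset.range_add_one, lmarginal_insert' _ hfT Finset.notMem_range_self,
    lmarginal_erase' _ hmT hpm]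
  convert lmarginal_sq_ne_zero _ _ hmW _ hpos using 3 with x
  have hpn : p ≠ n := hp.ne
  -- `A` is the fibre of `W` over the coordinates of `x` other than `p`
  set A : Set ℝ := {a | Function.update x p a ∈ W} with hA
  have hAm : MeasurableSet A := (measurable_update x) hW
  have hI : ∫⁻ b, W.indicator (fun _ => (1 : ℝ≥0∞)) (Function.update x p b) = volume A := by
    rw [← lintegral_indicator_one hAm]
    rfl
  have hR : MeasurableSet ((A ×ˢ A) \ N) := (hAm.prod hAm).diff hN
  have hmem : ∀ a b, Function.update (Function.update x p a) n b ∈ T ↔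
      (a, b) ∈ (A ×ˢ A) \ N := by
    intro a b
    have e1 : Function.update (Function.update x p a) n b p = a := by simp [hpn]
    have e2 : Function.update (Function.update x p a) n b n = b := by simp
    have e3 : Function.update (Function.update x p a) n b ∈ W ↔ a ∈ A :=
      ⟨hdep _ _ fun i hi => by simp [Function.update_of_ne hi.ne],
        hdep _ _ fun i hi => by simp [Function.update_of_ne hi.ne]⟩
    have e4 : Function.update (Function.update (Function.update x p a) n b) p b ∈ W ↔ b ∈ A := by
      have : ∀ i < n, Function.update (Function.update (Function.update x p a) n b) p b i
          = Function.update x p b i := by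
        intro i hi
        by_cases h : i = p
        · subst h; simp
        · simp [Function.update_of_ne h, Function.update_of_ne hi.ne]
      exact ⟨hdep _ _ this, hdep _ _ fun i hi => (this i hi).symm⟩
    rw [hTdef, mem_ofPred_eq, e1, e2, e3, e4]
    simp [and_assoc]
  rw [hI, ← Measure.prod_prod, ← Measure.volume_eq_prod, ← measure_sdiff_null (s := A ×ˢ A) (t := N) hN0,
    ← lintegral_indicator_one hR, Measure.volume_eq_prod, lintegral_prod _ (measurable_one.indicator hR).aemeasurable]
  refine lintegral_congr fun a => lintegral_congr fun b => ?_
  by_cases h : (a, b) ∈ (A ×ˢ A) \ N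
  · rw [indicator_of_mem h, indicator_of_mem ((hmem a b).2 h)]; rfl
  · rw [indicator_of_notMem h, indicator_of_notMem (fun h' => h ((hmem a b).1 h'))]

/-! ### One step of the construction -/

/-- The invariants of the set `W` of admissible tuples at stage `k`, where the tuples have the
`k + 1` coordinates `0, …, k`: `W` is closed, depends on these coordinates only, has positive
measure, has these coordinates in `K`, and any two distinct ones of them stay in a closed set
disjoint from `E`. -/
structure GoodStage (E : Set (ℝ × ℝ)) (K : Set ℝ) (x₀ : ℕ → ℝ) (k : ℕ)
    (W : Set (ℕ → ℝ)) : Prop where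
  closed : IsClosed W
  dep : ∀ z z' : ℕ → ℝ, (∀ i < k + 1, z i = z' i) → z ∈ W → z' ∈ W
  pos : coordLaw x₀ (k + 1) W ≠ 0
  mem : ∀ z ∈ W, ∀ i ≤ k, z i ∈ K
  sep : ∀ i ≤ k, ∀ j ≤ k, i ≠ j → Disjoint (closure ((fun z => (z i, z j)) '' W)) E

theorem goodStage_zero (E : Set (ℝ × ℝ)) (K : Set ℝ) (hK : IsClosed K) (hK0 : volume K ≠ 0)
    (x₀ : ℕ → ℝ) : GoodStage E K x₀ 0 {z | z 0 ∈ K} where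
  closed := hK.preimage (continuous_apply 0)
  dep := fun z z' h hz => by
    have := h 0 (by simp)
    rw [mem_ofPred_eq] at hz ⊢
    rwa [← this]
  pos := by
    have hm : MeasurableSet {z : ℕ → ℝ | z 0 ∈ K} :=
      (hK.preimage (continuous_apply 0)).measurableSet
    rw [coordLaw_apply _ _ hm]
    have : Finset.range (0 + 1) = {0} := rfl
    rw [this, lmarginal_singleton]
    convert hK0
    rw [← lintegral_indicator_one hK.measurableSet]
    refine lintegral_congr fun a => ?_
    by_cases h : a ∈ K <;> simp [indicator, h]
  mem := fun z hz i hi => by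
    obtain rfl : i = 0 := by omega
    exact hz
  sep := fun i hi j hj hij => by omega

/-- Coordinate `p` is split into `p` and the new coordinate `k + 1`: every tuple of the new stage
`W'` belongs to `W`, and so does the tuple with coordinate `p` replaced by coordinate `k + 1`.
All coordinates can be confined to small intervals, since countably many choices of the intervals
cover everything. -/
theorem GoodStage.step {E : Set (ℝ × ℝ)} {K : Set ℝ} {x₀ : ℕ → ℝ} {k : ℕ} {W : Set (ℕ → ℝ)}
    (hE0 : volume E = 0) (hsymm : ∀ x y, (x, y) ∈ E → (y, x) ∈ E)
    (hW : GoodStage E K x₀ k W) (p : ℕ) (hp : p ≤ k) :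
    ∃ W', GoodStage E K x₀ (k + 1) W' ∧ W' ⊆ W ∧
      (∀ z ∈ W', Function.update z p (z (k + 1)) ∈ W) ∧
      ∀ z ∈ W', ∀ z' ∈ W', ∀ i ≤ k + 1, dist (z i) (z' i) ≤ 1 / ((k : ℝ) + 1) := by
  obtain ⟨V, hVo, hEV, hVs, hV0⟩ := exists_open_symm E hE0 hsymm
  have hN : MeasurableSet (⋂ m, V m) := .iInter fun m => (hVo m).measurableSet
  have hT := coordLaw_split_ne_zero x₀ (k + 1) p (by omega) W hW.closed.measurableSet hW.dep
    hW.pos _ hN hV0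
  set ε : ℝ := 1 / ((k : ℝ) + 1) / 2 with hε
  have hε0 : 0 < ε := by positivity
  let d : ℕ → ℕ → ℝ := TopologicalSpace.denseSeq (ℕ → ℝ)
  let S : ℕ × ℕ → Set (ℕ → ℝ) := fun ml =>
    {z | z ∈ W ∧ Function.update z p (z (k + 1)) ∈ W ∧ (z p, z (k + 1)) ∉ V ml.1 ∧
      ∀ i ≤ k + 1, dist (z i) (d ml.2 i) ≤ ε}
  have hcov : {z | z ∈ W ∧ Function.update z p (z (k + 1)) ∈ W ∧
      (z p, z (k + 1)) ∉ ⋂ m, V m} ⊆ ⋃ ml, S ml := by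
    rintro z ⟨h1, h2, h3⟩
    obtain ⟨m, hm⟩ : ∃ m, (z p, z (k + 1)) ∉ V m := by simpa using h3
    have hO : IsOpen {w : ℕ → ℝ | ∀ i ∈ Finset.range (k + 2), dist (z i) (w i) < ε} := by
      have : {w : ℕ → ℝ | ∀ i ∈ Finset.range (k + 2), dist (z i) (w i) < ε} =
          ⋂ i ∈ Finset.range (k + 2), {w : ℕ → ℝ | dist (z i) (w i) < ε} := by
        ext w; simp
      rw [this]
      exact isOpen_biInter_finset fun i _ =>
        isOpen_lt (continuous_const.dist (continuous_apply i)) continuous_const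
    obtain ⟨l, hl⟩ := (TopologicalSpace.denseRange_denseSeq (ℕ → ℝ)).exists_mem_open hO
      ⟨z, fun i _ => by simpa using hε0⟩
    exact mem_iUnion.2 ⟨(m, l), h1, h2, hm, fun i hi =>
      (hl i (Finset.mem_range.2 (by omega))).le⟩
  obtain ⟨⟨m, l⟩, hml⟩ : ∃ ml, coordLaw x₀ (k + 1 + 1) (S ml) ≠ 0 := by
    by_contra! h
    exact hT (measure_mono_null hcov (measure_iUnion_null h))
  have hcu : Continuous fun z : ℕ → ℝ => Function.update z p (z (k + 1)) :=
    continuous_id.update p (continuous_apply (k + 1))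
  have hpair : ∀ i j, Continuous fun z : ℕ → ℝ => (z i, z j) := fun i j =>
    (continuous_apply i).prodMk (continuous_apply j)
  have hVE : Disjoint (V m)ᶜ E := disjoint_compl_left_iff_subset.2 (hEV m)
  refine ⟨S (m, l), ⟨?_, ?_, hml, ?_, ?_⟩, fun z hz => hz.1, fun z hz => hz.2.1, ?_⟩
  · refine hW.closed.inter ((hW.closed.preimage hcu).inter
      (((hVo m).isClosed_compl.preimage (hpair p (k + 1))).inter ?_))
    have : {z : ℕ → ℝ | ∀ i ≤ k + 1, dist (z i) (d l i) ≤ ε} =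
        ⋂ i, ⋂ (_ : i ≤ k + 1), {z : ℕ → ℝ | dist (z i) (d l i) ≤ ε} := by
      ext w; simp
    change IsClosed {z : ℕ → ℝ | ∀ i ≤ k + 1, dist (z i) (d l i) ≤ ε}
    rw [this]
    exact isClosed_iInter fun i => isClosed_iInter fun _ =>
      isClosed_le ((continuous_apply i).dist continuous_const) continuous_const
  · rintro z z' h ⟨h1, h2, h3, h4⟩
    refine ⟨hW.dep z z' (fun i hi => h i (by omega)) h1, ?_, ?_, ?_⟩
    · refine hW.dep _ _ (fun i hi => ?_) h2
      by_cases hip : i = p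
      · subst hip; simp [h (k + 1) (by omega)]
      · simp [Function.update_of_ne hip, h i (by omega)]
    · rwa [← h p (by omega), ← h (k + 1) (by omega)]
    · intro i hi
      rw [← h i (by omega)]
      exact h4 i hi
  · intro z hz i hi
    rcases Nat.le_succ_iff.1 hi with hi | rfl
    · exact hW.mem z hz.1 i hi
    · simpa using hW.mem _ hz.2.1 p hp
  · have hnew : ∀ j ≤ k, j ≠ p →
        (fun z => (z (k + 1), z j)) '' S (m, l) ⊆ (fun z => (z p, z j)) '' W ∧
        (fun z => (z j, z (k + 1))) '' S (m, l) ⊆ (fun z => (z j, z p)) '' W := by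
      intro j hj hjp
      constructor <;>
      · rintro _ ⟨z, hz, rfl⟩
        exact ⟨_, hz.2.1, by simp [Function.update_of_ne hjp]⟩
    intro i hi j hj hij
    rcases Nat.le_succ_iff.1 hi with hi | rfl <;> rcases Nat.le_succ_iff.1 hj with hj | rfl
    · exact (hW.sep i hi j hj hij).mono_left (closure_mono (image_mono fun z hz => hz.1))
    · by_cases hip : i = p
      · subst hip
        refine hVE.mono_left (closure_minimal ?_ (hVo m).isClosed_compl)
        rintro _ ⟨z, hz, rfl⟩
        exact hz.2.2.1
      · exact (hW.sep i hi p hp hip).mono_left (closure_mono (hnew i hi hip).2)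
    · by_cases hjp : j = p
      · subst hjp
        refine hVE.mono_left (closure_minimal ?_ (hVo m).isClosed_compl)
        rintro _ ⟨z, hz, rfl⟩
        exact fun h => hz.2.2.1 (hVs m _ _ h)
      · exact (hW.sep p hp j hj (Ne.symm hjp)).mono_left (closure_mono (hnew j hj hjp).1)
    · exact absurd rfl hij
  · intro z hz z' hz' i hi
    have h1 := hz.2.2.2 i hi
    have h2 := hz'.2.2.2 i hi
    have h3 := dist_triangle_right (z i) (z' i) (d l i)
    have : 1 / ((k : ℝ) + 1) = ε + ε := by rw [hε]; ring
    linarith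

/-! ### Tracing coordinates back to an earlier stage -/

/-- Coordinate `k + 1` is born by splitting coordinate `(Nat.unpair k).1`; `ancestor n i` follows
these births backwards from `i` until an index `≤ n` is reached. -/
def ancestor (n i : ℕ) : ℕ :=
  if h : i ≤ n then i else ancestor n (Nat.unpair (i - 1)).1
termination_by i
decreasing_by
  have := Nat.unpair_left_le (i - 1)
  omega

theorem ancestor_of_le {n i : ℕ} (h : i ≤ n) : ancestor n i = i := by
  rw [ancestor, dif_pos h]

theorem ancestor_succ {n k : ℕ} (h : n ≤ k) :
    ancestor n (k + 1) = ancestor n (Nat.unpair k).1 := by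
  rw [ancestor, dif_neg (by omega), Nat.add_sub_cancel]

theorem ancestor_le (n i : ℕ) : ancestor n i ≤ n := by
  induction i using Nat.strong_induction_on with
  | _ i ih =>
    by_cases h : i ≤ n
    · rwa [ancestor_of_le h]
    · obtain ⟨k, rfl⟩ : ∃ k, i = k + 1 := ⟨i - 1, by omega⟩
      rw [ancestor_succ (by omega)]
      exact ih _ (Nat.lt_succ_of_le (Nat.unpair_left_le k))

/-- Coordinates `i`, `j` of a tuple at stage `m` with distinct ancestors at stage `n` appear
simultaneously as the coordinates `ancestor n i`, `ancestor n j` of a tuple of stage `n`. The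
case `i = j` is included. -/
theorem exists_mem_ancestor {W : ℕ → Set (ℕ → ℝ)} (hmono : ∀ k, W (k + 1) ⊆ W k)
    (hsplit : ∀ k, ∀ z ∈ W (k + 1), Function.update z (Nat.unpair k).1 (z (k + 1)) ∈ W k)
    (n : ℕ) {m : ℕ} (hnm : n ≤ m) : ∀ z ∈ W m, ∀ i ≤ m, ∀ j ≤ m,
      (ancestor n i = ancestor n j → i = j) →
      ∃ w ∈ W n, w (ancestor n i) = z i ∧ w (ancestor n j) = z j := by
  induction m, hnm using Nat.le_induction with
  | base =>
    intro z hz i hi j hj _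
    exact ⟨z, hz, by rw [ancestor_of_le hi], by rw [ancestor_of_le hj]⟩
  | succ m hnm ih =>
    intro z hz i hi j hj hij
    have hp := Nat.unpair_left_le m
    have hz' := hsplit m z hz
    have hanc := ancestor_succ hnm
    rcases Nat.le_succ_iff.1 hi with hi | rfl <;> rcases Nat.le_succ_iff.1 hj with hj | rfl
    · exact ih z (hmono m hz) i hi j hj hij
    · have hne : i ≠ (Nat.unpair m).1 := by
        rintro rfl
        have := hij hanc.symm
        omega
      obtain ⟨w, hw, h1, h2⟩ := ih _ hz' i hi _ hp fun h => by
        have := hij (h.trans hanc.symm)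
        omega
      exact ⟨w, hw, by simpa [Function.update_of_ne hne] using h1, by rw [hanc]; simpa using h2⟩
    · have hne : j ≠ (Nat.unpair m).1 := by
        rintro rfl
        have := hij hanc
        omega
      obtain ⟨w, hw, h1, h2⟩ := ih _ hz' _ hp j hj fun h => by
        have := hij (hanc.trans h)
        omega
      exact ⟨w, hw, by rw [hanc]; simpa using h1, by simpa [Function.update_of_ne hne] using h2⟩
    · obtain ⟨w, hw, h1, h2⟩ := ih _ hz' _ hp _ hp fun _ => rfl
      exact ⟨w, hw, by rw [hanc]; simpa using h1, by rw [hanc]; simpa using h2⟩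

/-- The frozen coordinates lie in `K` as well, so a stage contains a point of the compact
product `K ^ ℕ`. -/
theorem GoodStage.exists_mem {E : Set (ℝ × ℝ)} {K : Set ℝ} {x₀ : ℕ → ℝ} {k : ℕ}
    {W : Set (ℕ → ℝ)} (hx₀ : ∀ i, x₀ i ∈ K) (hW : GoodStage E K x₀ k W) :
    (W ∩ univ.pi fun _ => K).Nonempty := by
  have hm : Measurable (Function.updateFinset x₀ (Finset.range (k + 1))) := measurable_updateFinset
  have hpos := hW.pos
  rw [coordLaw, Measure.map_apply hm hW.closed.measurableSet] at hpos
  obtain ⟨y, hy⟩ := nonempty_of_measure_ne_zero hpos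
  refine ⟨_, hy, fun i _ => ?_⟩
  by_cases hi : i ∈ Finset.range (k + 1)
  · exact hW.mem _ hy i (Nat.lt_succ_iff.1 (Finset.mem_range.1 hi))
  · simpa [Function.updateFinset, Finset.mem_range.not.1 hi] using hx₀ i

/-! ### The perfect set -/

theorem psp_null_analytic
    (B : Set ℝ) (hBborel : MeasurableSet B) (hBpos : 0 < volume B)
    (E : Set (ℝ × ℝ)) (hE : IsEquivOn B E) (hEan : AnalyticSet E)
    (hclasses : ∀ x ∈ B, volume {y | (x, y) ∈ E} = 0) :
    ∃ P : Set ℝ, P ⊆ B ∧ Perfect P ∧ P.Nonempty ∧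
      ∀ x ∈ P, ∀ y ∈ P, x ≠ y → (x, y) ∉ E := by
  obtain ⟨hEB, hrefl, hsymm, -⟩ := hE
  have hE0 : volume E = 0 := by
    refine analytic_null_of_sections E hEan fun x => ?_
    by_cases hx : x ∈ B
    · exact hclasses x hx
    · refine measure_mono_null (t := ∅) (fun y hy => hx (hEB hy).1) measure_empty
  obtain ⟨K, hKB, hK, hK0⟩ := hBborel.exists_lt_isCompact hBpos
  obtain ⟨c, hc⟩ := nonempty_of_measure_ne_zero hK0.ne'
  let x₀ : ℕ → ℝ := fun _ => c
  -- `Nat.unpair` makes every coordinate be split infinitely often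
  have hstep : ∀ (k : ℕ) (W : {W // GoodStage E K x₀ k W}),
      ∃ W' : {W // GoodStage E K x₀ (k + 1) W}, W'.1 ⊆ W.1 ∧
        (∀ z ∈ W'.1, Function.update z (Nat.unpair k).1 (z (k + 1)) ∈ W.1) ∧
        ∀ z ∈ W'.1, ∀ z' ∈ W'.1, ∀ i ≤ k + 1, dist (z i) (z' i) ≤ 1 / ((k : ℝ) + 1) := by
    rintro k ⟨W, hW⟩
    obtain ⟨W', h1, h2⟩ := hW.step hE0 hsymm _ (Nat.unpair_left_le k)
    exact ⟨⟨W', h1⟩, h2⟩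
  choose next hmono hsplit hdiam using hstep
  let G : (k : ℕ) → {W // GoodStage E K x₀ k W} := fun k =>
    Nat.rec ⟨_, goodStage_zero E K hK.isClosed hK0.ne' x₀⟩ (fun k W => next k W) k
  let W : ℕ → Set (ℕ → ℝ) := fun k => (G k).1
  have hG : ∀ k, GoodStage E K x₀ k (W k) := fun k => (G k).2
  have hmono' : ∀ k, W (k + 1) ⊆ W k := fun k => hmono k (G k)
  have hsplit' : ∀ k, ∀ z ∈ W (k + 1), Function.update z (Nat.unpair k).1 (z (k + 1)) ∈ W k :=
    fun k => hsplit k (G k)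
  have hdiam' : ∀ k, ∀ z ∈ W (k + 1), ∀ z' ∈ W (k + 1), ∀ i ≤ k + 1,
      dist (z i) (z' i) ≤ 1 / ((k : ℝ) + 1) := fun k => hdiam k (G k)
  have hcpt : IsCompact (univ.pi fun _ : ℕ => K) := isCompact_univ_pi fun _ => hK
  -- a single point in all stages provides the dense subset `range a` of the perfect set
  obtain ⟨a, ha⟩ := IsCompact.nonempty_iInter_of_sequence_nonempty_isCompact_isClosed
    (fun k => W k ∩ univ.pi fun _ => K) (fun k => inter_subset_inter_left _ (hmono' k))
    (fun k => (hG k).exists_mem fun _ => hc) (hcpt.inter_left (hG 0).closed)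
    fun k => (hG k).closed.inter hcpt.isClosed
  have haW : ∀ k, a ∈ W k := fun k => (mem_iInter.1 ha k).1
  have haK : ∀ i, a i ∈ K := fun i => (mem_iInter.1 ha 0).2 i trivial
  have hPK : closure (range a) ⊆ K := closure_minimal (range_subset_iff.2 haK) hK.isClosed
  refine ⟨closure (range a), hPK.trans hKB, Preperfect.perfect_closure ?_,
    ⟨a 0, subset_closure (mem_range_self 0)⟩, ?_⟩
  · rintro _ ⟨i, rfl⟩
    rw [accPt_iff_nhds]
    intro U hU
    obtain ⟨ε, hε, hball⟩ := Metric.mem_nhds_iff.1 hU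
    obtain ⟨t, ht⟩ := exists_nat_one_div_lt hε
    -- a later splitting of coordinate `i`
    set k := Nat.pair i (t + 1) with hk
    have hkp : (Nat.unpair k).1 = i := by rw [hk, Nat.unpair_pair]
    have hkt : t + 1 ≤ k := Nat.right_le_pair i (t + 1)
    have hik : i ≤ k := Nat.left_le_pair i (t + 1)
    refine ⟨a (k + 1), ⟨hball ?_, mem_range_self _⟩, fun heq => ?_⟩
    · obtain ⟨j, hj⟩ : ∃ j, k = j + 1 := ⟨k - 1, by omega⟩
      have h1 := hsplit' k a (haW (k + 1))
      rw [hkp, hj] at h1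
      have h2 := hdiam' j _ h1 a (haW (j + 1)) i (by omega)
      rw [Function.update_self] at h2
      rw [Metric.mem_ball, hj]
      refine (h2.trans ?_).trans_lt ht
      have : (t : ℝ) ≤ j := by exact_mod_cast (by omega : t ≤ j)
      gcongr
    · -- `E` contains the diagonal of `B`, so separation from `E` forces `a (k + 1) ≠ a i`
      refine ((hG (k + 1)).sep i (by omega) (k + 1) le_rfl (by omega)).le_bot
        ⟨subset_closure ⟨a, haW (k + 1), rfl⟩, ?_⟩
      dsimp only
      rw [heq]
      exact hrefl _ (hKB (haK i))
  · intro x hx y hy hxy hmem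
    obtain ⟨t, ht⟩ := exists_nat_one_div_lt (dist_pos.2 hxy)
    -- at stage `n` the intervals are shorter than the distance of `x` and `y`
    set n := t + 1 with hn
    let A : ℕ → Set ℝ := fun u => a '' {i | ancestor n i = u}
    have hcov : closure (range a) ⊆ ⋃ u ∈ Iic n, closure (A u) := by
      rw [← (finite_Iic n).closure_biUnion]
      refine closure_mono ?_
      rintro _ ⟨i, rfl⟩
      exact mem_iUnion₂.2 ⟨ancestor n i, ancestor_le n i, i, rfl, rfl⟩
    obtain ⟨u, hu, hxu⟩ := mem_iUnion₂.1 (hcov hx)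
    obtain ⟨v, hv, hyv⟩ := mem_iUnion₂.1 (hcov hy)
    have hcl : (x, y) ∈ closure (A u ×ˢ A v) := by
      rw [closure_prod_eq]; exact ⟨hxu, hyv⟩
    by_cases huv : u = v
    · subst huv
      have hone : ∀ i, ∃ w ∈ W n, w (ancestor n i) = a i := by
        intro i
        obtain ⟨w, hw, h1, -⟩ := exists_mem_ancestor hmono' hsplit' n (le_max_left n i) a (haW _)
          i (le_max_right n i) i (le_max_right n i) fun _ => rfl
        exact ⟨w, hw, h1⟩
      have hsub : closure (A u ×ˢ A u) ⊆ {q : ℝ × ℝ | dist q.1 q.2 ≤ 1 / ((t : ℝ) + 1)} := by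
        refine closure_minimal ?_ (isClosed_le (continuous_fst.dist continuous_snd)
          continuous_const)
        rintro ⟨_, _⟩ ⟨⟨i, hi, rfl⟩, j, hj, rfl⟩
        obtain ⟨w, hw, h1⟩ := hone i
        obtain ⟨w', hw', h2⟩ := hone j
        rw [mem_ofPred_eq] at hi hj
        rw [hi] at h1
        rw [hj] at h2
        have := hdiam' t w hw w' hw' u hu
        rwa [h1, h2] at this
      exact absurd (hsub hcl) (not_le.2 ht)
    · have hsub : A u ×ˢ A v ⊆ (fun z => (z u, z v)) '' W n := by
        rintro ⟨_, _⟩ ⟨⟨i, hi, rfl⟩, j, hj, rfl⟩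
        rw [mem_ofPred_eq] at hi hj
        obtain ⟨w, hw, h1, h2⟩ := exists_mem_ancestor hmono' hsplit' n
          (m := max n (max i j)) (le_max_left _ _) a (haW _) i (by omega) j (by omega)
          fun h => absurd (hi.symm.trans (h.trans hj)) huv
        rw [hi] at h1
        rw [hj] at h2
        exact ⟨w, hw, by simp only [h1, h2]⟩
      exact ((hG n).sep u hu v hv huv).le_bot ⟨closure_mono hsub hcl, hmem⟩
end

section
/- Let I be a ccc σ-ideal on a Polish space X containing all singletons. Then every coanalytic subset of X which has no perfect subset belongs to I. -/
/-!
If `Aᶜ` is nonempty, write it as the range of a continuous `f : (ℕ → ℕ) → X`, and let `C s` be the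
closure of the `f`-image of the basic clopen set of the finite sequence `s`. Then `x ∈ Aᶜ` exactly
when the tree `{s | x ∈ C s}` has an infinite branch. Let `rankGE C α s` be the set of those `x`
for which the node `s` has rank at least `α` in this tree; for countable `α` it is Borel.

For every `α < ω₁`, the set `(rankGE C α [])ᶜ` is a Borel subset of `A`. A Borel set without a
perfect subset is countable, so this set lies in `I`. The rest of `A` is covered by the countably
many layers `U s α = rankGE C α s \ rankGE C (α + 1) s`: if `x` had no node of rank exactly `α`,
then every node of rank at least `α` would have a child of rank at least `α`, and the tree would
have a branch.

The layers `U s α` form a Borel analogue of an Ulam matrix: for fixed `s` they are pairwise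
disjoint, so by ccc only countably many of them are `I`-positive. As there are countably many `s`
and uncountably many `α < ω₁`, some `α` has `U s α ∈ I` for all `s`, whence `A ∈ I`.
-/

open MeasureTheory Set

open Ordinal Cardinal in
theorem countable_Iio_of_lt_omega_one {α : Ordinal.{0}} (hα : α < ω_ 1) : (Iio α).Countable := by
  rw [← Cardinal.le_aleph0_iff_set_countable, Cardinal.mk_Iio_ordinal, Cardinal.lift_le_aleph0,
    ← Cardinal.lt_aleph_one_iff, ← Cardinal.lt_ord, Cardinal.ord_aleph]
  exact hα

open Ordinal Cardinal in
theorem not_countable_Iio_omega_one : ¬ (Iio (ω_ 1 : Ordinal.{0})).Countable := by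
  rw [← Cardinal.le_aleph0_iff_set_countable, Cardinal.mk_Iio_ordinal, Cardinal.lift_le_aleph0,
    ← Cardinal.ord_aleph, Cardinal.card_ord, not_le]
  exact Cardinal.aleph0_lt_aleph_one

theorem exists_cantor_injection_of_measurableSet {X : Type*} [TopologicalSpace X]
    [PolishSpace X] [MeasurableSpace X] [BorelSpace X] {B : Set X} (hB : MeasurableSet B)
    (hunc : ¬ B.Countable) :
    ∃ g : (ℕ → Bool) → X, range g ⊆ B ∧ Continuous g ∧ Function.Injective g := by
  -- Refine the topology so that `B` becomes closed.
  obtain ⟨t', hle, hp, hcl, -⟩ := hB.isClopenable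
  obtain ⟨g, hgB, hgc, hgi⟩ :=
    @IsClosed.exists_nat_bool_injection_of_not_countable X t' hp B hcl hunc
  refine ⟨g, hgB, ?_, hgi⟩
  exact continuous_le_rng hle hgc

/-- The perfect set property of Borel sets. -/
theorem countable_of_measurableSet_of_no_perfect {X : Type*} [TopologicalSpace X]
    [PolishSpace X] [MeasurableSpace X] [BorelSpace X] {B : Set X} (hB : MeasurableSet B)
    (h : ¬ ∃ P : Set X, P ⊆ B ∧ Perfect P ∧ P.Nonempty) : B.Countable := by
  by_contra hunc
  obtain ⟨g, hgB, hgc, hgi⟩ := exists_cantor_injection_of_measurableSet hB hunc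
  have hunc' : ¬ (range g).Countable := by
    intro hc
    have h1 : Countable (ℕ → Bool) := by
      rw [← image_univ] at hc
      exact countable_univ_iff.1 (countable_of_injective_of_countable_image hgi.injOn hc)
    rw [← Cardinal.mk_le_aleph0_iff] at h1
    exact Cardinal.aleph0_lt_continuum.not_ge (by simpa using h1)
  obtain ⟨D, hD, hDn, hDC⟩ :=
    exists_perfect_nonempty_of_isClosed_of_not_countable (isCompact_range hgc).isClosed hunc'
  exact h ⟨D, hDC.trans hgB, hD, hDn⟩

/-- For a scheme of sets `C` indexed by finite sequences (stored in reverse, the last entry being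
the head of the list), `rankGE C α s` is the set of points `x` for which `s` is a node of rank at
least `α` in the tree `{s | x ∈ C s}`. -/
def rankGE {X : Type*} (C : List ℕ → Set X) (α : Ordinal.{0}) (s : List ℕ) : Set X :=
  C s ∩ ⋂ β, ⋂ (_ : β < α), ⋃ n, rankGE C β (n :: s)
termination_by α

section rankGE

variable {X : Type*} {C : List ℕ → Set X}

theorem mem_rankGE {α : Ordinal.{0}} {s : List ℕ} {x : X} :
    x ∈ rankGE C α s ↔ x ∈ C s ∧ ∀ β < α, ∃ n, x ∈ rankGE C β (n :: s) := by
  rw [rankGE]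
  simp only [mem_inter_iff, mem_iInter, mem_iUnion]

theorem rankGE_anti {α β : Ordinal.{0}} (h : α ≤ β) (s : List ℕ) :
    rankGE C β s ⊆ rankGE C α s := by
  intro x hx
  rw [mem_rankGE] at hx ⊢
  exact ⟨hx.1, fun γ hγ => hx.2 γ (hγ.trans_le h)⟩

open Ordinal in
theorem measurableSet_rankGE [MeasurableSpace X] (hC : ∀ s, MeasurableSet (C s))
    (α : Ordinal.{0}) (hα : α < ω_ 1) (s : List ℕ) : MeasurableSet (rankGE C α s) := by
  induction α using WellFoundedLT.induction generalizing s with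
  | ind α ih =>
    rw [rankGE]
    refine (hC s).inter (MeasurableSet.biInter (countable_Iio_of_lt_omega_one hα) ?_)
    intro β hβ
    exact MeasurableSet.iUnion fun n => ih β hβ (lt_trans (mem_Iio.1 hβ) hα) _

/-- The nodes along an infinite branch have rank at least `α` for every `α`. -/
theorem mem_rankGE_of_branch {x : X} {y : ℕ → ℕ} (hy : ∀ n, x ∈ C (PiNat.res y n))
    (α : Ordinal.{0}) (n : ℕ) : x ∈ rankGE C α (PiNat.res y n) := by
  induction α using WellFoundedLT.induction generalizing n with
  | ind α ih => exact mem_rankGE.2 ⟨hy n, fun β hβ => ⟨y n, ih β hβ (n + 1)⟩⟩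

/-- If the root has rank at least `α` but no node has rank exactly `α`, there is an infinite
branch. -/
theorem exists_branch {x : X} {α : Ordinal.{0}} (h0 : x ∈ rankGE C α [])
    (h : ∀ s, x ∈ rankGE C α s → x ∈ rankGE C (Order.succ α) s) :
    ∃ y : ℕ → ℕ, ∀ n, x ∈ C (PiNat.res y n) := by
  have step : ∀ s, ∃ n, x ∈ rankGE C α s → x ∈ rankGE C α (n :: s) := by
    intro s
    by_cases hs : x ∈ rankGE C α s
    · obtain ⟨n, hn⟩ := (mem_rankGE.1 (h s hs)).2 α (Order.lt_succ α)
      exact ⟨n, fun _ => hn⟩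
    · exact ⟨0, fun h => absurd h hs⟩
  choose g hg using step
  let b : ℕ → List ℕ := fun k => Nat.rec [] (fun _ s => g s :: s) k
  have hres : ∀ n, PiNat.res (fun k => g (b k)) n = b n := by
    intro n
    induction n with
    | zero => rfl
    | succ n ih => rw [PiNat.res_succ, ih]
  have hb : ∀ n, x ∈ rankGE C α (b n) := by
    intro n
    induction n with
    | zero => exact h0
    | succ n ih => exact hg _ ih
  exact ⟨fun k => g (b k), fun n => by rw [hres]; exact (mem_rankGE.1 (hb n)).1⟩

end rankGE

/-- By continuity, the closed sets `closure (f '' PiNat.cylinder y n)` shrink to the point `f y`. -/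
theorem eq_of_forall_mem_closure {X : Type*} [TopologicalSpace X] [T3Space X]
    {f : (ℕ → ℕ) → X} (hf : Continuous f) {x : X} {y : ℕ → ℕ}
    (h : ∀ n, x ∈ closure (f '' PiNat.cylinder y n)) : x = f y := by
  by_contra hne
  obtain ⟨V, hV, hVc, hVx⟩ := exists_mem_nhds_isClosed_subset
    (isOpen_compl_singleton.mem_nhds (show f y ∈ ({x} : Set X)ᶜ from fun h => hne h.symm))
  obtain ⟨n, hn⟩ : ∃ n, PiNat.cylinder y n ⊆ f ⁻¹' V := by
    obtain ⟨W, ⟨z, n, rfl⟩, hyW, hWV⟩ :=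
      (PiNat.isTopologicalBasis_cylinders (fun _ : ℕ => ℕ)).mem_nhds_iff.1
        (hf.continuousAt.preimage_mem_nhds hV)
    exact ⟨n, by rwa [PiNat.mem_cylinder_iff_eq.1 hyW]⟩
  have := closure_minimal (image_subset_iff.2 hn) hVc (h n)
  exact hVx this rfl

/-- In a disjoint family of sets that are Borel for indices in `S`, all but countably many of the
indices in `S` belong to members of the ccc σ-ideal. -/
theorem countable_positive_of_disjoint {X ι : Type*} [MeasurableSpace X] {I : Set (Set X)}
    (hI : IsSigmaIdeal I) (hccc : IsCCCIdeal I) {S : Set ι} {U : ι → Set X}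
    (hU : ∀ i ∈ S, MeasurableSet (U i)) (hd : ∀ i j, i ≠ j → Disjoint (U i) (U j)) :
    {i ∈ S | U i ∉ I}.Countable := by
  have hne : ∀ i j, U i ∉ I → U i = U j → i = j := by
    intro i j hi hij
    by_contra hne
    have := hd i j hne
    rw [← hij, disjoint_self] at this
    exact hi (this ▸ hI.1)
  refine Set.countable_of_injective_of_countable_image (f := U)
    (fun i hi j _ hij => hne i j hi.2 hij) (hccc _ ?_ ?_)
  · rintro _ ⟨i, hi, rfl⟩
    exact ⟨hU i hi.1, hi.2⟩
  · rintro _ ⟨i, hi, rfl⟩ _ ⟨j, hj, rfl⟩ hij ⟨D, -, hDI, hD⟩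
    have hdis := hd i j (fun h => hij (by rw [h]))
    exact hDI (hI.2.1 _ _ hD (hdis.inter_eq ▸ hI.1))

theorem IsSigmaIdeal.iUnion_mem {X ι : Type*} [Countable ι] {I : Set (Set X)}
    (hI : IsSigmaIdeal I) {u : ι → Set X} (h : ∀ i, u i ∈ I) : (⋃ i, u i) ∈ I := by
  rcases isEmpty_or_nonempty ι with hι | hι
  · rw [iUnion_of_empty]; exact hI.1
  · obtain ⟨e, he⟩ := exists_surjective_nat ι
    rw [← he.iUnion_comp]
    exact hI.2.2 _ fun n => h _

theorem IsSigmaIdeal.mem_of_countable {X : Type*} {I : Set (Set X)}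
    (hI : IsSigmaIdeal I) (hsing : ∀ x : X, ({x} : Set X) ∈ I) {s : Set X} (hs : s.Countable) :
    s ∈ I := by
  have := hs.to_subtype
  have h := hI.iUnion_mem (u := fun x : s => ({(x : X)} : Set X)) fun x => hsing x
  rwa [iUnion_singleton_eq_range, Subtype.range_coe] at h

open Ordinal in
theorem coanalytic_no_perfect_subset_small {X : Type*} [TopologicalSpace X]
    [PolishSpace X] [MeasurableSpace X] [BorelSpace X]
    (I : Set (Set X)) (hI : IsSigmaIdeal I) (hccc : IsCCCIdeal I)
    (hsing : ∀ x : X, ({x} : Set X) ∈ I)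
    (A : Set X) (hAco : AnalyticSet Aᶜ)
    (hnoperfect : ¬ ∃ P : Set X, P ⊆ A ∧ Perfect P ∧ P.Nonempty) :
    A ∈ I := by
  have hsmall : ∀ B, MeasurableSet B → B ⊆ A → B ∈ I := fun B hB hBA =>
    hI.mem_of_countable hsing <| countable_of_measurableSet_of_no_perfect hB
      fun ⟨P, hP, h⟩ => hnoperfect ⟨P, hP.trans hBA, h⟩
  rw [AnalyticSet] at hAco
  rcases hAco with hA | ⟨f, hf, hfA⟩
  · rw [compl_empty_iff] at hA
    exact hsmall A (hA ▸ MeasurableSet.univ) subset_rfl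
  let C : List ℕ → Set X := fun s => closure (f '' {y | PiNat.res y s.length = s})
  have hCres : ∀ y n, C (PiNat.res y n) = closure (f '' PiNat.cylinder y n) := by
    intro y n
    simp only [C, PiNat.res_length, PiNat.cylinder_eq_res]
  have hDm := measurableSet_rankGE (C := C) fun s => isClosed_closure.measurableSet
  have hsucc : ∀ α : Ordinal.{0}, α < ω_ 1 → Order.succ α < ω_ 1 := fun α hα =>
    (Cardinal.isSuccLimit_omega 1).succ_lt hα
  let U : List ℕ → Ordinal.{0} → Set X := fun s α => rankGE C α s \ rankGE C (Order.succ α) s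
  have hUd : ∀ s α β, α ≠ β → Disjoint (U s α) (U s β) := by
    intro s
    have key : ∀ α β, α < β → Disjoint (U s α) (U s β) := fun α β hαβ =>
      Set.disjoint_left.2 fun x hx hy => hx.2 (rankGE_anti (Order.succ_le_of_lt hαβ) s hy.1)
    intro α β hne
    rcases lt_or_gt_of_ne hne with h | h
    · exact key α β h
    · exact (key β α h).symm
  have hcount : (⋃ s, {α ∈ Iio (ω_ 1) | U s α ∉ I}).Countable :=
    countable_iUnion fun s => countable_positive_of_disjoint hI hccc
      (fun α hα => (hDm α hα s).diff (hDm _ (hsucc α hα) s)) (hUd s)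
  obtain ⟨α, hα, hαI⟩ : ∃ α : Ordinal.{0}, α < ω_ 1 ∧ ∀ s, U s α ∈ I := by
    by_contra! hcon
    refine not_countable_Iio_omega_one (hcount.mono fun α hα => ?_)
    obtain ⟨s, hs⟩ := hcon α hα
    exact mem_iUnion.2 ⟨s, hα, hs⟩
  have hroot : (rankGE C α [])ᶜ ∈ I := by
    refine hsmall _ (hDm α hα []).compl (compl_subset_comm.1 ?_)
    rw [← hfA]
    rintro _ ⟨y, rfl⟩
    refine mem_rankGE_of_branch (y := y) (fun n => ?_) α 0
    rw [hCres]
    exact subset_closure (mem_image_of_mem f (PiNat.self_mem_cylinder y n))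
  -- Index the cover of `A` by `Option (List ℕ)`, with `none` for the points of small root rank.
  refine hI.2.1 _ _ ?_ (hI.iUnion_mem
    (u := fun o : Option (List ℕ) => o.elim (rankGE C α [])ᶜ (fun s => U s α)) ?_)
  · intro x hxA
    by_contra hx
    simp only [mem_iUnion, Option.exists, Option.elim, not_or, not_exists, mem_compl_iff,
      not_not] at hx
    obtain ⟨y, hy⟩ := exists_branch hx.1 fun s hs => by
      by_contra h
      exact hx.2 s ⟨hs, h⟩
    have hxy : x = f y := eq_of_forall_mem_closure hf fun n => hCres y n ▸ hy n
    have : x ∈ Aᶜ := hfA ▸ hxy ▸ mem_range_self y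
    exact this hxA
  · rintro (_ | s)
    · exact hroot
    · exact hαI s
end

section
/- Let I be a ccc σ-ideal on the Baire space ℕ^ℕ. Then the following are equivalent: (a) 𝚺¹₂ has ℙ_I-Borel uniformization; (b) 𝚷¹₁ (the coanalytic sets) has ℙ_I-Borel uniformization; (c) every 𝚫¹₂ subset of ℕ^ℕ is I-measurable. -/
/-!
The nontrivial direction is from 𝚫¹₂ measurability to uniformization of coanalytic sets. It combines
two ingredients.

Kondô's theorem (`exists_coanalytic_uniformization`): a coanalytic `A ⊆ X × ℕ^ℕ` with nonempty
sections contains the graph of a function `f`, and the graph can be taken coanalytic. Attach to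
`z = (x, y)` the tree of attempts to show `z ∉ A`; as a relation `R z` on `ℕ` it depends on `z`
semicontinuously, and `z ∈ A` exactly when it is well-founded (`exists_rel_of_coanalytic`). For fixed
`x`, minimize lexicographically the sequence of pairs (rank of `n` in `R (x, y)`, `y n`) over the
section `A_x`. The infimum is attained by a unique `y` (`existsUnique_isBest`): the limit of
approximate minimizers stays in `A` because the limiting ranks are strictly monotone on its tree. A
comparison of ranks amounts to the existence of a simulation, which is an analytic condition, so
being beaten by another point of the section is analytic and the graph of `f` is coanalytic (`analytic_not_isBest`).

Borel approximation (`exists_borel_approx`): since the graph of `f` is coanalytic, each level set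
`{x | f x n = k}` is 𝚫¹₂ (`delta12_level`), hence `I`-measurable. By ccc an `I`-measurable set is
Borel up to a Borel `I`-small set (`IMeasurable.exists_borel`), so `f` is Borel off a single Borel
`I`-small set `N`, and `B \ N` is as required.

The other implications are direct. A coanalytic set is 𝚺¹₂; a 𝚺¹₂ set is uniformized by uniformizing
the coanalytic set it is projected from, after coding pairs of sequences by sequences; and for `A` in
𝚫¹₂, uniformizing the coanalytic set of witnesses for `x ∈ A` or `x ∉ A`, with the alternative
recorded in the first entry, decides `A` on a Borel positive set.
-/

open MeasureTheory Set

/-- A set is 𝚺¹₂ if it is the projection of a coanalytic subset of `X × ℕ^ℕ`. -/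
def Sigma12 {X : Type*} [TopologicalSpace X] (A : Set X) : Prop :=
  ∃ C : Set (X × (ℕ → ℕ)), AnalyticSet Cᶜ ∧ A = Prod.fst '' C

/-- A set is 𝚫¹₂ if both it and its complement are 𝚺¹₂. -/
def Delta12 {X : Type*} [TopologicalSpace X] (A : Set X) : Prop :=
  Sigma12 A ∧ Sigma12 Aᶜ

/-- The pointclass `Γ` has `ℙ_I`-Borel uniformization. -/
def HasBorelUnif (I : Set (Set (ℕ → ℕ))) (Γ : Set ((ℕ → ℕ) × (ℕ → ℕ)) → Prop) : Prop :=
  ∀ A : Set ((ℕ → ℕ) × (ℕ → ℕ)), Γ A → (∀ x : ℕ → ℕ, ∃ y : ℕ → ℕ, (x, y) ∈ A) →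
    ∀ B : Set (ℕ → ℕ), MeasurableSet B → B ∉ I →
      ∃ B' : Set (ℕ → ℕ), MeasurableSet B' ∧ B' ∉ I ∧ B' ⊆ B ∧
        ∃ f : (ℕ → ℕ) → (ℕ → ℕ), Measurable f ∧ ∀ x ∈ B', (x, f x) ∈ A

/-! ### Trees of approximations to points of an analytic set -/

/-- `s` is a node of the tree of attempts to find `w` with `g w = z`: some `w` extends `s` and
`g w` approximates `z` up to an error depending on the length of `s`. Sequences are listed with the
most recent entry first, as in `PiNat.res`. -/
def IsNode {Z : Type*} [MetricSpace Z] (g : (ℕ → ℕ) → Z) (z : Z) (s : List ℕ) : Prop :=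
  ∃ w, PiNat.res w s.length = s ∧ dist (g w) z < 1 / ((s.length : ℝ) + 1)

lemma IsNode.tail {Z : Type*} [MetricSpace Z] {g : (ℕ → ℕ) → Z} {z : Z} {a : ℕ} {s : List ℕ}
    (h : IsNode g z (a :: s)) : IsNode g z s := by
  obtain ⟨w, hw, hd⟩ := h
  refine ⟨w, ?_, hd.trans_le ?_⟩
  · simp only [List.length_cons, PiNat.res_succ, List.cons.injEq] at hw
    exact hw.2
  · apply one_div_le_one_div_of_le
    · positivity
    · simp

/-- The child relation of the tree `IsNode g z`: `t` is a node and an immediate successor of `s`. -/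
def ChildRel {Z : Type*} [MetricSpace Z] (g : (ℕ → ℕ) → Z) (z : Z) (t s : List ℕ) : Prop :=
  ∃ a, t = a :: s ∧ IsNode g z t

lemma ChildRel.wellFounded {Z : Type*} [MetricSpace Z] {g : (ℕ → ℕ) → Z} {z : Z}
    (h : Acc (ChildRel g z) []) : WellFounded (ChildRel g z) := by
  have key : ∀ s, IsNode g z s → Acc (ChildRel g z) s := by
    intro s
    induction s with
    | nil => exact fun _ => h
    | cons a s ih => exact fun hs => (ih hs.tail).inv ⟨a, rfl, hs⟩
  refine ⟨fun s => Acc.intro s ?_⟩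
  rintro t ⟨a, rfl, ht⟩
  exact key _ ht

/-- The tree of attempts has no infinite branch through its root exactly when `z` is not a value of
`g`. -/
lemma ChildRel.acc_iff {Z : Type*} [MetricSpace Z] {g : (ℕ → ℕ) → Z} (hg : Continuous g) {z : Z} :
    Acc (ChildRel g z) [] ↔ z ∉ range g := by
  rw [← not_iff_not, not_not, not_acc_iff_exists_descending_chain]
  constructor
  · rintro ⟨f, h0, hf⟩
    choose w hw hn using hf
    have hres : ∀ n, f n = PiNat.res w n := by
      intro n
      induction n with
      | zero => simp [h0]
      | succ n ih => rw [hw, ih, PiNat.res_succ]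
    have hlen : ∀ n, (f n).length = n := fun n => by rw [hres, PiNat.res_length]
    choose v hv hd using hn
    -- the witnesses `v n` extend longer and longer pieces of the branch `w`
    have hlim : Filter.Tendsto v Filter.atTop (nhds w) := by
      rw [tendsto_pi_nhds]
      intro i
      apply tendsto_const_nhds.congr'
      filter_upwards [Filter.eventually_ge_atTop i] with n hn
      have h1 := hv n
      rw [hlen, hres, PiNat.res_eq_res] at h1
      exact (h1 (by omega)).symm
    refine ⟨w, tendsto_nhds_unique ((hg.tendsto w).comp hlim) ?_⟩
    rw [tendsto_iff_dist_tendsto_zero]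
    refine squeeze_zero (fun _ => dist_nonneg) (fun n => ?_)
      ((tendsto_one_div_add_atTop_nhds_zero_nat (𝕜 := ℝ)))
    refine (hd n).le.trans ?_
    rw [hlen]
    apply one_div_le_one_div_of_le
    · positivity
    · push_cast; linarith
  · rintro ⟨w, rfl⟩
    refine ⟨fun n => PiNat.res w n, PiNat.res_zero w, fun n => ⟨w n, PiNat.res_succ w n, w, ?_, ?_⟩⟩
    · rw [PiNat.res_length]
    · rw [dist_self]; positivity

lemma isOpen_childRel {Z : Type*} [MetricSpace Z] (g : (ℕ → ℕ) → Z) (t s : List ℕ) :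
    IsOpen {z | ChildRel g z t s} := by
  have : {z | ChildRel g z t s} = ⋃ a, ⋃ w, {z | t = a :: s ∧ PiNat.res w t.length = t ∧
      dist (g w) z < 1 / ((t.length : ℝ) + 1)} := by
    ext z; simp [ChildRel, IsNode]
  rw [this]
  refine isOpen_iUnion fun a => isOpen_iUnion fun w => ?_
  refine isOpen_const.and (isOpen_const.and ?_)
  exact isOpen_lt (by fun_prop) continuous_const

/-- Normal form for coanalytic sets: membership of `z` is well-foundedness of a relation on `ℕ`
depending on `z` in a semicontinuous way, and it is enough to test accessibility of `0`. -/
lemma exists_rel_of_coanalytic {Z : Type*} [TopologicalSpace Z] [TopologicalSpace.MetrizableSpace Z]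
    {A : Set Z} (hA : AnalyticSet Aᶜ) :
    ∃ R : Z → ℕ → ℕ → Prop, (∀ i j, IsOpen {z | R z i j}) ∧
      (∀ z, Acc (R z) 0 → z ∈ A) ∧ ∀ z ∈ A, WellFounded (R z) := by
  let := TopologicalSpace.metrizableSpaceMetric Z
  rw [AnalyticSet] at hA
  rcases hA with hA | ⟨g, hg, hr⟩
  · rw [compl_empty_iff] at hA
    refine ⟨fun _ _ _ => False, by simp, by simp [hA], fun _ _ => ⟨fun a => Acc.intro a ?_⟩⟩
    simp
  · let e : ℕ → List ℕ := Denumerable.ofNat (List ℕ)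
    have he : Function.Surjective e := fun s => ⟨Encodable.encode s, Denumerable.ofNat_encode s⟩
    have he0 : e 0 = [] := Denumerable.list_ofNat_zero
    have hmem : ∀ z, z ∈ A ↔ Acc (ChildRel g z) [] := by
      intro z
      rw [ChildRel.acc_iff hg, hr]; simp
    refine ⟨fun z i j => ChildRel g z (e i) (e j), fun i j => isOpen_childRel g _ _, ?_, ?_⟩
    · intro z hz
      rw [hmem]
      have key : ∀ i, Acc (fun i j => ChildRel g z (e i) (e j)) i → Acc (ChildRel g z) (e i) := by
        intro i hi
        induction hi with
        | intro i _ ih =>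
          refine Acc.intro _ fun t ht => ?_
          obtain ⟨k, rfl⟩ := he t
          exact ih k ht
      rw [← he0]
      exact key 0 hz
    · intro z hz
      exact InvImage.wf e (ChildRel.wellFounded ((hmem z).1 hz))

/-! ### Ranks and their comparison by simulations -/

open Classical in
/-- The ordinal rank of `i` in `r`, with value `0` if `i` is not in the well-founded part. -/
noncomputable def rk (r : ℕ → ℕ → Prop) (i : ℕ) : Ordinal.{0} :=
  if h : Acc r i then h.rank else 0

lemma rk_lt {r : ℕ → ℕ → Prop} {i j : ℕ} (hj : Acc r j) (h : r i j) : rk r i < rk r j := by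
  rw [rk, rk, dif_pos hj, dif_pos (hj.inv h)]
  exact hj.rank_lt_of_rel h

lemma rk_le {r : ℕ → ℕ → Prop} {j : ℕ} {o : Ordinal.{0}} (hj : Acc r j)
    (h : ∀ i, r i j → rk r i < o) : rk r j ≤ o := by
  rw [rk, dif_pos hj, hj.rank_eq]
  refine Ordinal.iSup_le fun ⟨i, hi⟩ => ?_
  have := h i hi
  rw [rk, dif_pos (hj.inv hi)] at this
  exact Order.succ_le_of_lt this

lemma exists_of_lt_rk {r : ℕ → ℕ → Prop} {j : ℕ} {o : Ordinal.{0}} (hj : Acc r j)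
    (h : o < rk r j) : ∃ i, r i j ∧ o ≤ rk r i := by
  by_contra! hc
  exact (rk_le hj hc).not_gt h

/-- There is a simulation of `r'` below `i` by `r` below `j`. A simulation is a relation, coded as
the zero set of `W`, such that every step down in `r'` can be matched by a step down in `r`. -/
def Sim (r' : ℕ → ℕ → Prop) (i : ℕ) (r : ℕ → ℕ → Prop) (j : ℕ) : Prop :=
  ∃ W : ℕ × ℕ → ℕ, W (i, j) = 0 ∧
    ∀ a b a', W (a, b) = 0 → r' a' a → ∃ b', r b' b ∧ W (a', b') = 0

lemma Sim.acc_and_le {r' r : ℕ → ℕ → Prop} {i j : ℕ} (h : Sim r' i r j) (hj : Acc r j) :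
    Acc r' i ∧ rk r' i ≤ rk r j := by
  obtain ⟨W, h0, hW⟩ := h
  induction hj generalizing i with
  | intro j hj ih =>
    have hstep : ∀ i', r' i' i → Acc r' i' ∧ rk r' i' < rk r j := by
      intro i' hi'
      obtain ⟨b, hb, hb0⟩ := hW _ _ _ h0 hi'
      exact ⟨(ih b hb hb0).1, (ih b hb hb0).2.trans_lt (rk_lt (Acc.intro j hj) hb)⟩
    have hacc : Acc r' i := Acc.intro i fun i' hi' => (hstep i' hi').1
    exact ⟨hacc, rk_le hacc fun i' hi' => (hstep i' hi').2⟩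

lemma sim_iff {r' r : ℕ → ℕ → Prop} (hr' : WellFounded r') (hr : WellFounded r) {i j : ℕ} :
    Sim r' i r j ↔ rk r' i ≤ rk r j := by
  classical
  refine ⟨fun h => (h.acc_and_le (hr.apply j)).2, fun h => ?_⟩
  refine ⟨fun p => if rk r' p.1 ≤ rk r p.2 then 0 else 1, by simpa using h, ?_⟩
  intro a b a' hab ha'
  have hab : rk r' a ≤ rk r b := by by_contra hc; simp [hc] at hab
  obtain ⟨b', hb', hle⟩ := exists_of_lt_rk (hr.apply b) ((rk_lt (hr'.apply a) ha').trans_le hab)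
  exact ⟨b', hb', by simp [hle]⟩

lemma exists_sim_iff {r' r : ℕ → ℕ → Prop} (hr' : WellFounded r') (hr : WellFounded r) {i j : ℕ} :
    (∃ k, r k j ∧ Sim r' i r k) ↔ rk r' i < rk r j := by
  constructor
  · rintro ⟨k, hk, hs⟩
    exact ((sim_iff hr' hr).1 hs).trans_lt (rk_lt (hr.apply j) hk)
  · intro h
    obtain ⟨k, hk, hle⟩ := exists_of_lt_rk (hr.apply j) h
    exact ⟨k, hk, (sim_iff hr' hr).2 hle⟩

/-! ### Lexicographically least limits -/

/-- Successive minimization: a nonempty set `S` of sequences in a well-order has a lexicographic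
infimum `d`, all of whose initial segments are initial segments of members of `S`. -/
lemma exists_lex_inf {L : Type*} [LinearOrder L] [WellFoundedLT L] {S : Set (ℕ → L)}
    (hS : S.Nonempty) :
    ∃ d : ℕ → L, (∀ n, ∃ s ∈ S, ∀ m < n, s m = d m) ∧
      ∀ s ∈ S, ∀ n, (∀ m < n, s m = d m) → d n ≤ s n := by
  let T : ℕ → Set (ℕ → L) := fun n => Nat.rec S (fun n U => {s ∈ U | ∀ t ∈ U, s n ≤ t n}) n
  have hT : ∀ n, T (n + 1) = {s ∈ T n | ∀ t ∈ T n, s n ≤ t n} := fun n => rfl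
  have hne : ∀ n, (T n).Nonempty := by
    intro n
    induction n with
    | zero => exact hS
    | succ n ih =>
      obtain ⟨s, hs, hmin⟩ := (InvImage.wf (fun s : ℕ → L => s n) (wellFounded_lt (α := L))).has_min
        (T n) ih
      exact ⟨s, hs, fun t ht => not_lt.1 (hmin t ht)⟩
  choose s hs using hne
  let d : ℕ → L := fun n => s (n + 1) n
  have hd : ∀ n, ∀ t ∈ T (n + 1), t n = d n := by
    intro n t ht
    have h1 := hs (n + 1)
    rw [hT] at ht h1
    exact le_antisymm (ht.2 (s (n + 1)) h1.1) (h1.2 _ ht.1)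
  have hmono : ∀ n, ∀ t ∈ T n, t ∈ S ∧ ∀ m < n, t m = d m := by
    intro n
    induction n with
    | zero => exact fun t ht => ⟨ht, by simp⟩
    | succ n ih =>
      intro t ht
      have h2 := hd n t ht
      rw [hT] at ht
      refine ⟨(ih t ht.1).1, fun m hm => ?_⟩
      rcases Nat.lt_succ_iff_lt_or_eq.1 hm with h | rfl
      · exact (ih t ht.1).2 m h
      · exact h2
  have hmem : ∀ t ∈ S, ∀ n, (∀ m < n, t m = d m) → t ∈ T n := by
    intro t ht n
    induction n with
    | zero => exact fun _ => ht
    | succ n ih =>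
      intro h
      rw [hT]
      refine ⟨ih fun m hm => h m (by omega), fun u hu => ?_⟩
      rw [h n (by omega)]
      have h1 := hs (n + 1)
      rw [hT] at h1
      exact h1.2 u hu
  refine ⟨d, fun n => ⟨s n, (hmono n _ (hs n)).1, (hmono n _ (hs n)).2⟩, fun t ht n h => ?_⟩
  have h1 := hs (n + 1)
  rw [hT] at h1
  exact h1.2 t (hmem t ht n h)

/-! ### Closure properties of analytic sets -/

lemma analytic_or {P : Type*} [TopologicalSpace P] {p q : P → Prop}
    (hp : AnalyticSet {x | p x}) (hq : AnalyticSet {x | q x}) :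
    AnalyticSet {x | p x ∨ q x} := by
  have : {x | p x ∨ q x} = ⋃ b : Bool, cond b {x | p x} {x | q x} := by
    ext x; simp [or_comm]
  rw [this]
  exact AnalyticSet.iUnion fun b => by cases b <;> assumption

lemma analytic_and {P : Type*} [TopologicalSpace P] [T2Space P] {p q : P → Prop}
    (hp : AnalyticSet {x | p x}) (hq : AnalyticSet {x | q x}) :
    AnalyticSet {x | p x ∧ q x} := by
  have : {x | p x ∧ q x} = ⋂ b : Bool, cond b {x | p x} {x | q x} := by
    ext x; simp [and_comm]
  rw [this]
  exact AnalyticSet.iInter fun b => by cases b <;> assumption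

lemma analytic_exists {P : Type*} [TopologicalSpace P] {p : ℕ → P → Prop}
    (hp : ∀ n, AnalyticSet {x | p n x}) :
    AnalyticSet {x | ∃ n, p n x} := by
  rw [ofPred_exists]
  exact AnalyticSet.iUnion hp

lemma analytic_forall {P : Type*} [TopologicalSpace P] [T2Space P] {p : ℕ → P → Prop}
    (hp : ∀ n, AnalyticSet {x | p n x}) :
    AnalyticSet {x | ∀ n, p n x} := by
  rw [ofPred_forall]
  exact AnalyticSet.iInter hp

lemma analytic_of_open {P : Type*} [TopologicalSpace P] [PolishSpace P] {s : Set P}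
    (hs : IsOpen s) : AnalyticSet s := by
  borelize P
  exact hs.measurableSet.analyticSet

/-- A condition on the values of continuous maps into discrete spaces is analytic. -/
lemma analytic_discrete {P D : Type*} [TopologicalSpace P] [PolishSpace P] [TopologicalSpace D]
    [DiscreteTopology D] {u : P → D} (hu : Continuous u) (s : Set D) :
    AnalyticSet {p | u p ∈ s} :=
  analytic_of_open ((isOpen_discrete s).preimage hu)

lemma analytic_sim {Z : Type*} [TopologicalSpace Z] {R : Z → ℕ → ℕ → Prop}
    (hR : ∀ i j, IsOpen {z | R z i j}) {P : Type*} [TopologicalSpace P] [PolishSpace P]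
    {u v : P → Z} (hu : Continuous u) (hv : Continuous v) (i j : ℕ) :
    AnalyticSet {p | Sim (R (u p)) i (R (v p)) j} := by
  let S : Set (P × (ℕ × ℕ → ℕ)) := {q | q.2 (i, j) = 0 ∧ ∀ a b a', q.2 (a, b) = 0 →
    R (u q.1) a' a → ∃ b', R (v q.1) b' b ∧ q.2 (a', b') = 0}
  have hS : AnalyticSet S := by
    borelize (P × (ℕ × ℕ → ℕ))
    have hW : ∀ c : ℕ × ℕ, MeasurableSet {q : P × (ℕ × ℕ → ℕ) | q.2 c = 0} := fun c =>
      ((isClopen_discrete {0}).preimage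
        (f := fun q : P × (ℕ × ℕ → ℕ) => q.2 c) (by fun_prop)).2.measurableSet
    have hRu : ∀ a b, MeasurableSet {q : P × (ℕ × ℕ → ℕ) | R (u q.1) a b} := fun a b =>
      ((hR a b).preimage (hu.comp continuous_fst)).measurableSet
    have hRv : ∀ a b, MeasurableSet {q : P × (ℕ × ℕ → ℕ) | R (v q.1) a b} := fun a b =>
      ((hR a b).preimage (hv.comp continuous_fst)).measurableSet
    refine MeasurableSet.analyticSet ?_
    have : S = {q | q.2 (i, j) = 0} ∩ ⋂ a, ⋂ b, ⋂ a', ({q | q.2 (a, b) = 0}ᶜ ∪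
        ({q | R (u q.1) a' a}ᶜ ∪ ⋃ b', ({q | R (v q.1) b' b} ∩ {q | q.2 (a', b') = 0}))) := by
      ext q
      simp only [S, mem_ofPred_eq, mem_union, mem_compl_iff, mem_iUnion, mem_inter_iff, mem_iInter,
        imp_iff_not_or]
    rw [this]
    exact (hW _).inter <| MeasurableSet.iInter fun a => MeasurableSet.iInter fun b =>
      MeasurableSet.iInter fun a' => (hW _).compl.union ((hRu _ _).compl.union
        (MeasurableSet.iUnion fun b' => (hRv _ _).inter (hW _)))
  convert! hS.image_of_continuous continuous_fst
  ext p
  simp [S, Sim]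

/-! ### Coanalytic uniformization of coanalytic sets -/

section Kondo

variable {X : Type*}

/-- The sequence to be minimized: the ranks of the relation attached to `z = (x, y)`, interleaved
with the values of `y`. -/
noncomputable def rankSeq (R : X × (ℕ → ℕ) → ℕ → ℕ → Prop) (z : X × (ℕ → ℕ)) (n : ℕ) :
    Ordinal.{0} ×ₗ ℕ :=
  toLex (rk (R z) n, z.2 n)

/-- A description by simulations of the condition that `0` is in the well-founded part of `R z'` and
the sequence of `z'` is lexicographically below that of `z`. The first clause takes care of the
well-foundedness; `R z` is assumed to be well-founded whenever this is used. -/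
def LexBelow (R : X × (ℕ → ℕ) → ℕ → ℕ → Prop) (z' z : X × (ℕ → ℕ)) : Prop :=
  Sim (R z') 0 (R z) 0 ∧ ∃ n,
    (∀ m, n ≤ m ∨ (Sim (R z') m (R z) m ∧ Sim (R z) m (R z') m ∧ z'.2 m = z.2 m)) ∧
    ((∃ k, R z k n ∧ Sim (R z') n (R z) k) ∨ (Sim (R z') n (R z) n ∧ z'.2 n < z.2 n))

lemma lexBelow_iff {R : X × (ℕ → ℕ) → ℕ → ℕ → Prop} {z' z : X × (ℕ → ℕ)}
    (hz' : WellFounded (R z')) (hz : WellFounded (R z)) :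
    LexBelow R z' z ↔
      ∃ n, (∀ m < n, rankSeq R z' m = rankSeq R z m) ∧ rankSeq R z' n < rankSeq R z n := by
  have heq : ∀ m, rankSeq R z' m = rankSeq R z m ↔
      (Sim (R z') m (R z) m ∧ Sim (R z) m (R z') m ∧ z'.2 m = z.2 m) := by
    intro m
    rw [sim_iff hz' hz, sim_iff hz hz', rankSeq, rankSeq, toLex_inj, Prod.mk.injEq, le_antisymm_iff,
      and_assoc]
  have hlt : ∀ n, rankSeq R z' n < rankSeq R z n ↔
      ((∃ k, R z k n ∧ Sim (R z') n (R z) k) ∨ (Sim (R z') n (R z) n ∧ z'.2 n < z.2 n)) := by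
    intro n
    rw [exists_sim_iff hz' hz, sim_iff hz' hz, rankSeq, rankSeq, Prod.Lex.toLex_lt_toLex]
    simp only
    constructor
    · rintro (h | ⟨h, h'⟩)
      · exact Or.inl h
      · exact Or.inr ⟨h.le, h'⟩
    · rintro (h | ⟨h, h'⟩)
      · exact Or.inl h
      · exact h.lt_or_eq.imp id fun e => ⟨e, h'⟩
  have hor : ∀ n m, (n ≤ m ∨ (Sim (R z') m (R z) m ∧ Sim (R z) m (R z') m ∧ z'.2 m = z.2 m)) ↔
      (m < n → rankSeq R z' m = rankSeq R z m) := by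
    intro n m
    rw [heq, ← not_lt]
    tauto
  unfold LexBelow
  simp only [hor, ← hlt]
  refine ⟨And.right, fun h => ⟨?_, h⟩⟩
  obtain ⟨n, hn, hlt'⟩ := h
  rw [sim_iff hz' hz]
  have h0 : rankSeq R z' 0 ≤ rankSeq R z 0 := by
    rcases Nat.eq_zero_or_pos n with rfl | hpos
    · exact hlt'.le
    · exact (hn 0 hpos).le
  rw [rankSeq, rankSeq, Prod.Lex.toLex_le_toLex] at h0
  exact h0.elim le_of_lt fun h => h.1.le

/-- `z = (x, y)` is in `A` and `y` has the lexicographically least sequence among the points of the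
section `A_x`. -/
def IsBest (R : X × (ℕ → ℕ) → ℕ → ℕ → Prop) (A : Set (X × (ℕ → ℕ))) (z : X × (ℕ → ℕ)) : Prop :=
  z ∈ A ∧ ∀ y', ¬ LexBelow R (z.1, y') z

variable [TopologicalSpace X]

lemma analytic_not_isBest [PolishSpace X] {A : Set (X × (ℕ → ℕ))} (hA : AnalyticSet Aᶜ)
    {R : X × (ℕ → ℕ) → ℕ → ℕ → Prop} (hR : ∀ i j, IsOpen {z | R z i j}) :
    AnalyticSet {z | IsBest R A z}ᶜ := by
  have h1 : {z | IsBest R A z}ᶜ = {z | z ∈ Aᶜ ∨ ∃ y', LexBelow R (z.1, y') z} := by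
    ext z
    simp only [IsBest, mem_compl_iff, mem_ofPred_eq, not_and_or, not_forall, not_not]
  rw [h1]
  refine analytic_or hA ?_
  let P := (X × (ℕ → ℕ)) × (ℕ → ℕ)
  let u : P → X × (ℕ → ℕ) := fun p => (p.1.1, p.2)
  have hu : Continuous u := by fun_prop
  have hv : Continuous (Prod.fst : P → X × (ℕ → ℕ)) := continuous_fst
  have hpair : ∀ m, Continuous fun p : P => ((u p).2 m, p.1.2 m) := fun m => by fun_prop
  suffices h : AnalyticSet {p : P | LexBelow R (u p) p.1} by
    convert! h.image_of_continuous continuous_fst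
    ext z
    simp [u, P]
  refine analytic_and (analytic_sim hR hu hv 0 0) (analytic_exists fun n => analytic_and
    (analytic_forall fun m => analytic_or ?_ ?_) (analytic_or ?_ ?_))
  · exact analytic_of_open isOpen_const
  · exact analytic_and (analytic_sim hR hu hv m m) (analytic_and (analytic_sim hR hv hu m m)
      (analytic_discrete (hpair m) {q | q.1 = q.2}))
  · exact analytic_exists fun k => analytic_and (analytic_of_open ((hR k n).preimage hv))
      (analytic_sim hR hu hv n k)
  · exact analytic_and (analytic_sim hR hu hv n n)
      (analytic_discrete (hpair n) {q | q.1 < q.2})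

/-- Semicontinuity of `R` makes the lexicographic infimum of a section attained: the limiting ranks
witness that the limit point stays in `A`. -/
lemma existsUnique_isBest {A : Set (X × (ℕ → ℕ))} {R : X × (ℕ → ℕ) → ℕ → ℕ → Prop}
    (hR : ∀ i j, IsOpen {z | R z i j}) (hacc : ∀ z, Acc (R z) 0 → z ∈ A)
    (hwf : ∀ z ∈ A, WellFounded (R z)) {x : X} (hx : ∃ y, (x, y) ∈ A) :
    ∃! y, IsBest R A (x, y) := by
  obtain ⟨y₀, hy₀⟩ := hx
  obtain ⟨d, hd, hmin⟩ := exists_lex_inf (S := (fun y => rankSeq R (x, y)) '' {y | (x, y) ∈ A})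
    ⟨_, y₀, hy₀, rfl⟩
  let y : ℕ → ℕ := fun n => (ofLex (d n)).2
  have hmono : ∀ i j, R (x, y) i j → (ofLex (d i)).1 < (ofLex (d j)).1 := by
    intro i j hij
    choose s hs hsd using hd
    choose t ht hts using hs
    have htd : ∀ n, ∀ m < n, rankSeq R (x, t n) m = d m := fun n m hm => by
      rw [← hsd n m hm, ← hts n]
    have hlim : Filter.Tendsto (fun n => (x, t n)) Filter.atTop (nhds (x, y)) := by
      refine tendsto_const_nhds.prodMk_nhds ?_
      rw [tendsto_pi_nhds]
      intro m
      apply tendsto_const_nhds.congr'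
      filter_upwards [Filter.eventually_gt_atTop m] with n hn
      simp only [y]
      rw [← htd n m hn]
      rfl
    obtain ⟨n, hn, hni, hnj⟩ := ((hlim.eventually ((hR i j).mem_nhds hij)).and
      ((Filter.eventually_gt_atTop i).and (Filter.eventually_gt_atTop j))).exists
    rw [← htd n i hni, ← htd n j hnj]
    exact rk_lt ((hwf _ (ht n)).apply j) hn
  have hywf : WellFounded (R (x, y)) :=
    Subrelation.wf (r := InvImage (· < ·) fun i => (ofLex (d i)).1) (fun h => hmono _ _ h)
      (InvImage.wf _ wellFounded_lt)
  have hyA : (x, y) ∈ A := hacc _ (hywf.apply 0)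
  have hrk : ∀ n, rk (R (x, y)) n ≤ (ofLex (d n)).1 := by
    intro n
    induction n using hywf.induction with
    | _ n ih => exact rk_le (hywf.apply n) fun i hi => (ih i hi).trans_lt (hmono i n hi)
  have hle : ∀ n, rankSeq R (x, y) n ≤ d n := by
    intro n
    rw [← toLex_ofLex (d n), rankSeq, Prod.Lex.toLex_le_toLex]
    exact (hrk n).lt_or_eq.imp id fun h => ⟨h, le_rfl⟩
  have heq : ∀ n, rankSeq R (x, y) n = d n := by
    intro n
    induction n using Nat.strong_induction_on with
    | _ n ih => exact le_antisymm (hle n) (hmin _ ⟨y, hyA, rfl⟩ n ih)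
  refine ⟨y, ⟨hyA, ?_⟩, ?_⟩
  · intro y' h
    have hy' : (x, y') ∈ A := hacc _ (h.1.acc_and_le (hywf.apply 0)).1
    obtain ⟨n, hn, hlt⟩ := (lexBelow_iff (hwf _ hy') hywf).1 h
    rw [heq] at hlt
    exact (hmin _ ⟨y', hy', rfl⟩ n fun m hm => (hn m hm).trans (heq m)).not_gt hlt
  · rintro y' ⟨hy', hbest⟩
    by_contra hne
    have hex : ∃ n, rankSeq R (x, y') n ≠ rankSeq R (x, y) n := by
      by_contra! hc
      refine hne (funext fun n => ?_)
      exact (Prod.mk.inj (toLex_inj.1 (hc n))).2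
    classical
    -- at the first disagreement the sequence of `y` is smaller
    have hfirst : ∀ m < Nat.find hex, rankSeq R (x, y) m = rankSeq R (x, y') m := fun m hm =>
      (not_not.1 (Nat.find_min hex hm)).symm
    refine hbest y ((lexBelow_iff hywf (hwf _ hy')).2 ⟨Nat.find hex, hfirst, ?_⟩)
    refine lt_of_le_of_ne ?_ (Nat.find_spec hex).symm
    rw [heq]
    exact hmin _ ⟨y', hy', rfl⟩ _ fun m hm => by rw [← heq, hfirst m hm]

/-- Kondô's theorem: a coanalytic set with nonempty sections contains the graph of a function, the
graph being itself coanalytic. -/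
theorem exists_coanalytic_uniformization [PolishSpace X] {A : Set (X × (ℕ → ℕ))}
    (hA : AnalyticSet Aᶜ) (hfull : ∀ x, ∃ y, (x, y) ∈ A) :
    ∃ f : X → ℕ → ℕ, (∀ x, (x, f x) ∈ A) ∧ AnalyticSet {z : X × (ℕ → ℕ) | z.2 = f z.1}ᶜ := by
  obtain ⟨R, hR, hacc, hwf⟩ := exists_rel_of_coanalytic hA
  choose f hf huniq using fun x => existsUnique_isBest hR hacc hwf (hfull x)
  refine ⟨f, fun x => (hf x).1, ?_⟩
  convert! analytic_not_isBest hA hR using 2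
  ext ⟨x, y⟩
  refine ⟨?_, fun h => huniq x y h⟩
  rintro h
  simp only [mem_ofPred_eq] at h
  subst h
  exact hf x

end Kondo

/-! ### Borel approximation modulo a ccc σ-ideal -/

lemma IsSigmaIdeal.union {X : Type*} {I : Set (Set X)} (hI : IsSigmaIdeal I) {s t : Set X}
    (hs : s ∈ I) (ht : t ∈ I) : s ∪ t ∈ I := by
  have h := hI.2.2 (fun n => if n = 0 then s else t) fun n => by split_ifs <;> assumption
  refine hI.2.1 _ _ (fun x hx => ?_) h
  rw [mem_iUnion]
  rcases hx with hx | hx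
  · exact ⟨0, by simpa using hx⟩
  · exact ⟨1, by simpa using hx⟩

/-- Under ccc an `I`-measurable set is Borel modulo `I`: a maximal disjoint family of Borel positive
sets deciding `A` is countable, and exhausts the space up to an `I`-small set. -/
lemma IMeasurable.exists_borel {X : Type*} [MeasurableSpace X] {I : Set (Set X)}
    (hI : IsSigmaIdeal I) (hccc : IsCCCIdeal I) {A : Set X} (hA : IMeasurable I A) :
    ∃ C D : Set X, MeasurableSet C ∧ MeasurableSet D ∧ C ⊆ A ∧ D ⊆ Aᶜ ∧ (C ∪ D)ᶜ ∈ I := by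
  let 𝒮 : Set (Set (Set X)) := {𝒜 | (∀ s ∈ 𝒜, MeasurableSet s ∧ s ∉ I ∧ (s ⊆ A ∨ s ⊆ Aᶜ)) ∧
    𝒜.PairwiseDisjoint id}
  obtain ⟨𝒜, hmax⟩ := zorn_subset 𝒮 (by
    intro c hc hchain
    refine ⟨⋃₀ c, ⟨?_, ?_⟩, fun s hs => subset_sUnion_of_mem hs⟩
    · rintro s ⟨𝒜, h𝒜, hs⟩
      exact (hc h𝒜).1 s hs
    · exact (pairwiseDisjoint_sUnion hchain.directedOn).2 fun 𝒜 h𝒜 => (hc h𝒜).2)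
  obtain ⟨h𝒜, hdisj⟩ := hmax.prop
  have hcount : 𝒜.Countable := by
    refine hccc 𝒜 (fun s hs => ⟨(h𝒜 s hs).1, (h𝒜 s hs).2.1⟩) ?_
    rintro s hs t ht hne ⟨u, -, hu, hsub⟩
    have hst : Disjoint s t := hdisj hs ht hne
    rw [hst.inter_eq, subset_empty_iff] at hsub
    exact hu (hsub ▸ hI.1)
  have hC : MeasurableSet (⋃₀ {s ∈ 𝒜 | s ⊆ A}) :=
    MeasurableSet.sUnion (hcount.mono fun s hs => hs.1) fun s hs => (h𝒜 s hs.1).1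
  have hD : MeasurableSet (⋃₀ {s ∈ 𝒜 | s ⊆ Aᶜ}) :=
    MeasurableSet.sUnion (hcount.mono fun s hs => hs.1) fun s hs => (h𝒜 s hs.1).1
  refine ⟨_, _, hC, hD, sUnion_subset fun s hs => hs.2, sUnion_subset fun s hs => hs.2, ?_⟩
  by_contra hpos
  obtain ⟨B, hBm, hB, hBsub, hdec⟩ := hA _ (hC.union hD).compl hpos
  have hBdisj : ∀ s ∈ 𝒜, Disjoint B s := by
    intro s hs
    refine disjoint_left.2 fun x hx hxs => hBsub hx ?_
    exact (h𝒜 s hs).2.2.imp (fun h => ⟨s, ⟨hs, h⟩, hxs⟩) fun h => ⟨s, ⟨hs, h⟩, hxs⟩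
  have hins : insert B 𝒜 ∈ 𝒮 := by
    refine ⟨?_, hdisj.insert fun s hs _ => hBdisj s hs⟩
    rintro s (rfl | hs)
    · exact ⟨hBm, hB, hdec⟩
    · exact h𝒜 s hs
  have hself : Disjoint B B :=
    hBdisj B (hmax.le_of_ge hins (subset_insert B 𝒜) (mem_insert B 𝒜))
  rw [disjoint_self] at hself
  exact hB (hself ▸ hI.1)

/-- A function all of whose level sets are `I`-measurable agrees with a Borel function outside a
Borel set in `I`. -/
lemma exists_borel_approx {X : Type*} [MeasurableSpace X] {I : Set (Set X)}
    (hI : IsSigmaIdeal I) (hccc : IsCCCIdeal I) (f : X → ℕ → ℕ)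
    (hf : ∀ n k, IMeasurable I {x | f x n = k}) :
    ∃ (N : Set X) (g : X → ℕ → ℕ), MeasurableSet N ∧ N ∈ I ∧ Measurable g ∧
      ∀ x ∉ N, g x = f x := by
  classical
  choose C D hC hD hCsub hDsub hsmall using fun n k => (hf n k).exists_borel hI hccc
  let N : Set X := ⋃ n, ⋃ k, (C n k ∪ D n k)ᶜ
  have hN : MeasurableSet N :=
    MeasurableSet.iUnion fun n => MeasurableSet.iUnion fun k => ((hC n k).union (hD n k)).compl
  have hlevel : ∀ n k, ∀ x ∉ N, f x n = k ↔ x ∈ C n k := by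
    intro n k x hx
    refine ⟨fun h => ?_, fun h => hCsub n k h⟩
    simp only [N, mem_iUnion, mem_compl_iff, not_exists, not_not] at hx
    exact (hx n k).resolve_right fun h' => hDsub n k h' h
  refine ⟨N, fun x => if x ∈ N then fun _ => 0 else f x, hN,
    hI.2.2 _ fun n => hI.2.2 _ fun k => hsmall n k, ?_, fun x hx => if_neg hx⟩
  refine measurable_pi_lambda _ fun n => measurable_to_countable' fun k => ?_
  have : (fun x => (if x ∈ N then fun _ => 0 else f x) n) ⁻¹' {k} =
      (N ∩ {_x | 0 = k}) ∪ (Nᶜ ∩ C n k) := by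
    ext x
    by_cases hx : x ∈ N
    · simp [hx]
    · simp [hx, hlevel n k x hx]
  rw [this]
  exact (hN.inter (MeasurableSet.const _)).union (hN.compl.inter (hC n k))

/-! ### The equivalences -/

lemma sigma12_of_coanalytic {X : Type*} [TopologicalSpace X] [PolishSpace X] {A : Set X}
    (hA : AnalyticSet Aᶜ) : Sigma12 A := by
  refine ⟨Prod.fst ⁻¹' A, hA.preimage continuous_fst, ?_⟩
  exact (image_preimage_eq A Prod.fst_surjective).symm

/-- A pair of points of Baire space, coded as a single point. -/
def unpairSeq (w : ℕ → ℕ) : (ℕ → ℕ) × (ℕ → ℕ) :=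
  (fun n => w (2 * n), fun n => w (2 * n + 1))

lemma continuous_unpairSeq : Continuous unpairSeq := by
  unfold unpairSeq; fun_prop

lemma unpairSeq_surjective : Function.Surjective unpairSeq := by
  rintro ⟨a, b⟩
  refine ⟨fun n => if n % 2 = 0 then a (n / 2) else b (n / 2), ?_⟩
  unfold unpairSeq
  congr 1
  · ext n; simp
  · ext n
    have h1 : (2 * n + 1) % 2 = 1 := by omega
    have h2 : (2 * n + 1) / 2 = n := by omega
    simp [h1, h2]

/-- To uniformize the projection of a coanalytic `C`, uniformize `C` itself and forget the witness
for membership in the projection. -/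
lemma borelUnif_sigma12_of_coanalytic {I : Set (Set (ℕ → ℕ))}
    (h : HasBorelUnif I (fun A => AnalyticSet Aᶜ)) : HasBorelUnif I (fun A => Sigma12 A) := by
  rintro A ⟨C, hC, rfl⟩ hfull B hBm hB
  let φ : (ℕ → ℕ) × (ℕ → ℕ) → ((ℕ → ℕ) × (ℕ → ℕ)) × (ℕ → ℕ) :=
    fun z => ((z.1, (unpairSeq z.2).1), (unpairSeq z.2).2)
  have hφ : Continuous φ := by
    have := continuous_unpairSeq
    fun_prop
  obtain ⟨B', hB'm, hB', hsub, f, hf, hfA⟩ := h (φ ⁻¹' C) (hC.preimage hφ) (fun x => by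
    obtain ⟨y, ⟨⟨x', y'⟩, v⟩, hz, heq⟩ := hfull x
    simp only [Prod.mk.injEq] at heq
    obtain ⟨rfl, rfl⟩ := heq
    obtain ⟨w, hw⟩ := unpairSeq_surjective (y', v)
    exact ⟨w, by simpa [φ, hw] using hz⟩) B hBm hB
  refine ⟨B', hB'm, hB', hsub, fun x => (unpairSeq (f x)).1,
    measurable_fst.comp (continuous_unpairSeq.measurable.comp hf), fun x hx => ?_⟩
  exact ⟨φ (x, f x), hfA x hx, rfl⟩

/-- If `A` and `Aᶜ` are projections of coanalytic sets, a Borel uniformization of the coanalytic set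
of witnesses for either alternative decides `A` on one of two Borel pieces. -/
lemma iMeasurable_of_borelUnif {I : Set (Set (ℕ → ℕ))} (hI : IsSigmaIdeal I)
    (h : HasBorelUnif I (fun A => AnalyticSet Aᶜ)) {A : Set (ℕ → ℕ)} (hA : Delta12 A) :
    IMeasurable I A := by
  obtain ⟨⟨C, hC, hAC⟩, ⟨D, hD, hAD⟩⟩ := hA
  intro B hBm hB
  -- the first entry of `y` chooses the alternative, the remaining ones are the witness
  let φ : (ℕ → ℕ) × (ℕ → ℕ) → (ℕ → ℕ) × (ℕ → ℕ) := fun z => (z.1, fun n => z.2 (n + 1))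
  have hφ : Continuous φ := by fun_prop
  let E : Set ((ℕ → ℕ) × (ℕ → ℕ)) := {z | (z.2 0 = 0 → φ z ∈ C) ∧ (z.2 0 ≠ 0 → φ z ∈ D)}
  have h0 : Continuous fun z : (ℕ → ℕ) × (ℕ → ℕ) => z.2 0 := by fun_prop
  have hE : AnalyticSet Eᶜ := by
    have : Eᶜ = {z | (z.2 0 ∈ ({0} : Set ℕ) ∧ z ∈ φ ⁻¹' Cᶜ) ∨
        (z.2 0 ∈ ({0}ᶜ : Set ℕ) ∧ z ∈ φ ⁻¹' Dᶜ)} := by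
      ext z
      simp only [E, mem_compl_iff, mem_ofPred_eq, mem_preimage, mem_singleton_iff]
      tauto
    rw [this]
    exact analytic_or (analytic_and (analytic_discrete h0 _) (hC.preimage hφ))
      (analytic_and (analytic_discrete h0 _) (hD.preimage hφ))
  have hfull : ∀ x, ∃ y, (x, y) ∈ E := by
    intro x
    by_cases hx : x ∈ A
    · rw [hAC] at hx
      obtain ⟨⟨x, v⟩, hv, rfl⟩ := hx
      exact ⟨fun n => Nat.casesOn n 0 v, fun _ => hv, fun h => absurd rfl h⟩
    · rw [← mem_compl_iff, hAD] at hx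
      obtain ⟨⟨x, v⟩, hv, rfl⟩ := hx
      exact ⟨fun n => Nat.casesOn n 1 v, fun h => absurd h one_ne_zero, fun _ => hv⟩
  obtain ⟨B', hB'm, hB', hsub, f, hf, hfE⟩ := h E hE hfull B hBm hB
  have hUm : MeasurableSet {x | f x 0 = 0} := (measurable_pi_iff.1 hf 0) (measurableSet_singleton 0)
  by_cases hpos : B' ∩ {x | f x 0 = 0} ∈ I
  · refine ⟨B' ∩ {x | f x 0 = 0}ᶜ, hB'm.inter hUm.compl, fun hneg => hB' ?_,
      inter_subset_left.trans hsub, Or.inr ?_⟩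
    · rw [← inter_union_compl B' {x | f x 0 = 0}]
      exact hI.union hpos hneg
    · rintro x ⟨hx, hx0⟩
      rw [hAD]
      exact ⟨_, (hfE x hx).2 hx0, rfl⟩
  · refine ⟨B' ∩ {x | f x 0 = 0}, hB'm.inter hUm, hpos, inter_subset_left.trans hsub, Or.inl ?_⟩
    rintro x ⟨hx, hx0⟩
    rw [hAC]
    exact ⟨_, (hfE x hx).1 hx0, rfl⟩

/-- Level sets of a function with coanalytic graph are 𝚫¹₂: both a level set and its complement are
projections of relatively clopen parts of the graph. -/
lemma delta12_level {X : Type*} [TopologicalSpace X] [PolishSpace X] {f : X → ℕ → ℕ}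
    (hf : AnalyticSet {z : X × (ℕ → ℕ) | z.2 = f z.1}ᶜ) (n k : ℕ) : Delta12 {x | f x n = k} := by
  have h0 : Continuous fun z : X × (ℕ → ℕ) => z.2 n := by fun_prop
  have key : ∀ s : Set ℕ, Sigma12 {x | f x n ∈ s} := by
    intro s
    refine ⟨{z | z.2 = f z.1} ∩ {z | z.2 n ∈ s}, ?_, ?_⟩
    · rw [compl_inter]
      exact analytic_or hf (analytic_discrete h0 sᶜ)
    · ext x
      simp
  exact ⟨key {k}, key {k}ᶜ⟩

lemma borelUnif_coanalytic_of_iMeasurable {I : Set (Set (ℕ → ℕ))} (hI : IsSigmaIdeal I)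
    (hccc : IsCCCIdeal I) (h : ∀ A : Set (ℕ → ℕ), Delta12 A → IMeasurable I A) :
    HasBorelUnif I (fun A => AnalyticSet Aᶜ) := by
  intro A hA hfull B hBm hB
  obtain ⟨f, hfA, hgraph⟩ := exists_coanalytic_uniformization hA hfull
  obtain ⟨N, g, hNm, hN, hg, hgf⟩ := exists_borel_approx hI hccc f
    fun n k => h _ (delta12_level hgraph n k)
  refine ⟨B \ N, hBm.diff hNm, fun hsmall => hB ?_, sdiff_subset, g, hg, fun x hx => ?_⟩
  · refine hI.2.1 _ _ ?_ (hI.union hsmall hN)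
    rw [sdiff_union_self]
    exact subset_union_left
  · rw [hgf x hx.2]
    exact hfA x

theorem unif_tfae (I : Set (Set (ℕ → ℕ))) (hI : IsSigmaIdeal I) (hccc : IsCCCIdeal I) :
    (HasBorelUnif I (fun A => Sigma12 A) ↔ HasBorelUnif I (fun A => AnalyticSet Aᶜ)) ∧
    (HasBorelUnif I (fun A => AnalyticSet Aᶜ) ↔
      ∀ A : Set (ℕ → ℕ), Delta12 A → IMeasurable I A) :=
  ⟨⟨fun h A hA => h A (sigma12_of_coanalytic hA), borelUnif_sigma12_of_coanalytic⟩,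
    fun h _ hA => iMeasurable_of_borelUnif hI h hA,
    borelUnif_coanalytic_of_iMeasurable hI hccc⟩
end

section
/- Let I be a σ-ideal on the Baire space ℕ^ℕ such that 𝚷¹₂ has ℙ_I-Borel uniformization. Then for every equivalence relation E on ℕ^ℕ which, as a subset of ℕ^ℕ × ℕ^ℕ, is analytic and all of whose equivalence classes are Borel, and for every Borel I-positive set B ⊆ ℕ^ℕ, there is a Borel I-positive set B' ⊆ B such that E ∩ (B' × B') is Borel. -/
/-!
Complements of `E`-classes are Borel, hence analytic, so each of them is a section `U_c` of a
universal analytic set `U` (`exists_universal_closed`, with `U` the projection of a closed set `F`).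
The set of pairs `(x, c)` such that `U_c` is the complement of the class of `x` is 𝚷¹₂
(`sigma12_compl_coding`) and has nonempty vertical sections, so it is uniformized by a Borel
function `f` on some positive Borel set `B'`. On `B' × B'` the complement of `E` is then
`{(x, y) | y ∈ U_{f(x)}}`, which is analytic because `f` is Borel. Thus `E ∩ (B' × B')` and its
complement are both analytic, and Suslin's theorem makes `E ∩ (B' × B')` Borel.
-/

open MeasureTheory Set

/-- Instance synthesis exceeds its default size bound on iterated products of `ℕ^ℕ`; this composes
the instances in stages. -/
lemma polishSpace_prod {X Y : Type*} [TopologicalSpace X] [TopologicalSpace Y] [PolishSpace X]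
    [PolishSpace Y] : PolishSpace (X × Y) :=
  inferInstance

/-- An analytic subset of a Polish space is the projection of a closed set: if it is the range of
`f`, the (transposed) graph of `f` works. -/
lemma AnalyticSet.exists_isClosed_proj {X : Type*} [TopologicalSpace X] [T2Space X]
    {S : Set X} (hS : AnalyticSet S) :
    ∃ H : Set (X × (ℕ → ℕ)), IsClosed H ∧ ∀ p, p ∈ S ↔ ∃ z, (p, z) ∈ H := by
  rw [AnalyticSet] at hS
  rcases hS with rfl | ⟨f, hf, rfl⟩
  · exact ⟨∅, isClosed_empty, by simp⟩
  · refine ⟨{q | f q.2 = q.1}, isClosed_eq (hf.comp continuous_snd) continuous_fst, ?_⟩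
    intro p
    simp

/-- There is a closed set `F` whose projection `{(c, y) | ∃ z, (c, y, z) ∈ F}` is universal for
analytic subsets of `ℕ^ℕ`. A closed subset of `ℕ^ℕ × ℕ^ℕ` is coded by the set `{n | c n ≠ 0}` of
indices of the basic open sets disjoint from it. -/
lemma exists_universal_closed :
    ∃ F : Set ((ℕ → ℕ) × ((ℕ → ℕ) × (ℕ → ℕ))), IsClosed F ∧
      ∀ S : Set (ℕ → ℕ), AnalyticSet S → ∃ c, ∀ y, y ∈ S ↔ ∃ z, (c, y, z) ∈ F := by
  classical
  obtain ⟨b, hbc, -, hb⟩ :=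
    TopologicalSpace.exists_countable_basis ((ℕ → ℕ) × (ℕ → ℕ))
  have hne : b.Nonempty := by
    obtain ⟨v, hv, -⟩ := hb.exists_subset_of_mem_open (mem_univ default) isOpen_univ
    exact ⟨v, hv⟩
  obtain ⟨u, rfl⟩ := hbc.exists_eq_range hne
  refine ⟨{q | ∀ n, q.1 n = 0 ∨ q.2 ∉ u n}, ?_, ?_⟩
  · simp only [ofPred_forall]
    refine isClosed_iInter fun n => ?_
    refine IsClosed.union ?_ ?_
    · exact isClosed_eq ((continuous_apply n).comp continuous_fst) continuous_const
    · exact ((hb.isOpen ⟨n, rfl⟩).preimage continuous_snd).isClosed_compl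
  · intro S hS
    obtain ⟨H, hH, hSH⟩ := AnalyticSet.exists_isClosed_proj hS
    refine ⟨fun n => if u n ⊆ Hᶜ then 1 else 0, fun y => ?_⟩
    rw [hSH]
    refine exists_congr fun z => ⟨fun h n => ?_, fun h => ?_⟩
    · by_cases hn : u n ⊆ Hᶜ
      · exact Or.inr fun hz => hn hz h
      · exact Or.inl (if_neg hn)
    · by_contra hz
      obtain ⟨_, ⟨n, rfl⟩, hzn, hn⟩ := hb.exists_subset_of_mem_open hz hH.isOpen_compl
      rcases h n with h0 | h0
      · simp [hn] at h0
      · exact h0 hzn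

/-- The relation "`c` codes the complement of the vertical section of `E` at `x`" is 𝚷¹₂. -/
lemma sigma12_compl_coding {E : Set ((ℕ → ℕ) × (ℕ → ℕ))} (hE : AnalyticSet E)
    {F : Set ((ℕ → ℕ) × ((ℕ → ℕ) × (ℕ → ℕ)))} (hF : IsClosed F) :
    Sigma12 {p : (ℕ → ℕ) × (ℕ → ℕ) |
      ∀ y, (p.1, y) ∉ E ↔ ∃ z, (p.2, y, z) ∈ F}ᶜ := by
  obtain ⟨H, hH, hEH⟩ := AnalyticSet.exists_isClosed_proj hE
  have hP : PolishSpace (((ℕ → ℕ) × (ℕ → ℕ)) × (ℕ → ℕ)) := polishSpace_prod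
  have hP' : PolishSpace ((((ℕ → ℕ) × (ℕ → ℕ)) × (ℕ → ℕ)) × (ℕ → ℕ)) := polishSpace_prod
  -- A single real `w` encodes `y` with `(x, y) ∈ E ↔ y ∈ U_c` and witnesses for both memberships.
  obtain ⟨g, hg, hgs⟩ :=
    PolishSpace.exists_nat_nat_continuous_surjective ((ℕ → ℕ) × (ℕ → ℕ) × (ℕ → ℕ))
  let K : Set (((ℕ → ℕ) × (ℕ → ℕ)) × (ℕ → ℕ)) :=
    {q | (q.1.2, (g q.2).1, (g q.2).2.1) ∈ F} ∩ {q | ((q.1.1, (g q.2).1), (g q.2).2.2) ∈ H}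
  let V : Set (((ℕ → ℕ) × (ℕ → ℕ)) × (ℕ → ℕ)) :=
    {q | ∃ z, (q.1.2, (g q.2).1, z) ∈ F} ∪ {q | (q.1.1, (g q.2).1) ∈ E}
  have hK : IsClosed K :=
    (hF.preimage (f := fun q : ((ℕ → ℕ) × (ℕ → ℕ)) × (ℕ → ℕ) =>
      (q.1.2, (g q.2).1, (g q.2).2.1)) (by fun_prop)).inter
    (hH.preimage (f := fun q : ((ℕ → ℕ) × (ℕ → ℕ)) × (ℕ → ℕ) =>
      ((q.1.1, (g q.2).1), (g q.2).2.2)) (by fun_prop))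
  have hV : AnalyticSet V := by
    have h1 : AnalyticSet {q : ((ℕ → ℕ) × (ℕ → ℕ)) × (ℕ → ℕ) |
        ∃ z, (q.1.2, (g q.2).1, z) ∈ F} := by
      have hcl := hF.preimage
        (f := fun r : (((ℕ → ℕ) × (ℕ → ℕ)) × (ℕ → ℕ)) × (ℕ → ℕ) =>
          (r.1.1.2, (g r.1.2).1, r.2)) (by fun_prop)
      convert hcl.analyticSet.image_of_continuous continuous_fst using 1
      ext q
      simp
    have h2 : AnalyticSet {q : ((ℕ → ℕ) × (ℕ → ℕ)) × (ℕ → ℕ) | (q.1.1, (g q.2).1) ∈ E} :=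
      hE.preimage (f := fun q : ((ℕ → ℕ) × (ℕ → ℕ)) × (ℕ → ℕ) =>
        (q.1.1, (g q.2).1)) (by fun_prop)
    have h3 : V = ⋃ i : Bool, cond i _ _ := union_eq_iUnion
    rw [h3]
    exact AnalyticSet.iUnion fun i => by cases i <;> assumption
  refine ⟨K ∪ Vᶜ, ?_, ?_⟩
  · rw [compl_union, compl_compl, inter_eq_iInter]
    refine AnalyticSet.iInter fun i => ?_
    cases i
    · exact hV
    · exact hK.isOpen_compl.measurableSet.analyticSet
  · ext ⟨x, c⟩
    have hKV : (x, c) ∈ Prod.fst '' (K ∪ Vᶜ) ↔ ∃ w, ((x, c), w) ∈ K ∪ Vᶜ := by simp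
    rw [hKV, mem_compl_iff, mem_ofPred_eq, not_forall]
    constructor
    · rintro ⟨y, hy⟩
      by_cases hxy : (x, y) ∈ E
      · obtain ⟨z', hz'⟩ := (hEH _).1 hxy
        obtain ⟨z, hz⟩ : ∃ z, (c, y, z) ∈ F := by
          by_contra hn
          exact hy ⟨fun h => absurd hxy h, fun h => absurd h hn⟩
        obtain ⟨w, hw⟩ := hgs (y, z, z')
        exact ⟨w, Or.inl ⟨by simpa [hw] using hz, by simpa [hw] using hz'⟩⟩
      · have hn : ¬ ∃ z, (c, y, z) ∈ F := fun h => hy ⟨fun _ => h, fun _ => hxy⟩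
        obtain ⟨w, hw⟩ := hgs (y, default, default)
        refine ⟨w, Or.inr ?_⟩
        rintro (h | h)
        · exact hn (by simpa [hw] using h)
        · exact hxy (by simpa [hw] using h)
    · rintro ⟨w, ⟨h1, h2⟩ | h⟩ <;> refine ⟨(g w).1, fun hy => ?_⟩
      · exact hy.2 ⟨_, h1⟩ ((hEH _).2 ⟨_, h2⟩)
      · by_cases hxy : (x, (g w).1) ∈ E
        · exact h (Or.inr hxy)
        · exact h (Or.inl (hy.1 hxy))

theorem pi12_unif_implies_borel_canonization (I : Set (Set (ℕ → ℕ)))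
    (hI : IsSigmaIdeal I)
    (hunif : HasBorelUnif I (fun A => Sigma12 Aᶜ)) :
    ∀ E : Set ((ℕ → ℕ) × (ℕ → ℕ)), IsEquivOn (univ : Set (ℕ → ℕ)) E → AnalyticSet E →
      (∀ x : ℕ → ℕ, MeasurableSet {y | (x, y) ∈ E}) →
      ∀ B : Set (ℕ → ℕ), MeasurableSet B → B ∉ I →
        ∃ B' : Set (ℕ → ℕ), MeasurableSet B' ∧ B' ∉ I ∧ B' ⊆ B ∧
          MeasurableSet (E ∩ B' ×ˢ B') := by
  intro E _ hEan hEcl B hB hBI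
  have hP : PolishSpace (((ℕ → ℕ) × (ℕ → ℕ)) × (ℕ → ℕ)) := polishSpace_prod
  obtain ⟨F, hF, hFu⟩ := exists_universal_closed
  obtain ⟨B', hB', hB'I, hB'B, f, hf, hfA⟩ := hunif _ (sigma12_compl_coding hEan hF)
    (fun x => hFu {y | (x, y) ∉ E} (hEcl x).compl.analyticSet) B hB hBI
  refine ⟨B', hB', hB'I, hB'B, ?_⟩
  have hBB : MeasurableSet (B' ×ˢ B') := hB'.prod hB'
  refine AnalyticSet.measurableSet_of_compl ?_ ?_
  · rw [inter_eq_iInter]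
    refine AnalyticSet.iInter fun i => ?_
    cases i
    · exact hBB.analyticSet
    · exact hEan
  · have hM : MeasurableSet {r : ((ℕ → ℕ) × (ℕ → ℕ)) × (ℕ → ℕ) |
        r.1 ∈ B' ×ˢ B' → (f r.1.1, r.1.2, r.2) ∈ F} := by
      have h1 : MeasurableSet {r : ((ℕ → ℕ) × (ℕ → ℕ)) × (ℕ → ℕ) | r.1 ∈ B' ×ˢ B'} :=
        measurable_fst hBB
      have h2 : MeasurableSet {r : ((ℕ → ℕ) × (ℕ → ℕ)) × (ℕ → ℕ) |
          (f r.1.1, r.1.2, r.2) ∈ F} :=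
        (show Measurable fun r : ((ℕ → ℕ) × (ℕ → ℕ)) × (ℕ → ℕ) => (f r.1.1, r.1.2, r.2) by
          fun_prop) hF.measurableSet
      exact h1.imp h2
    convert hM.analyticSet.image_of_continuous continuous_fst using 1
    ext ⟨x, y⟩
    by_cases hxy : (x, y) ∈ B' ×ˢ B'
    · have := hfA x hxy.1 y
      simp only [mem_compl_iff, mem_inter_iff, hxy, and_true, this]
      simp [hxy.1, hxy.2]
    · simp only [mem_compl_iff, mem_inter_iff, hxy, and_false, not_false_eq_true, true_iff]
      exact ⟨((x, y), default), fun h => absurd h hxy, rfl⟩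
end
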